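/- Let n be a positive integer, let ε > 0, and let G be a subgroup of the symmetric group S_n, with δ_G = 1/[S_n : G] where [S_n : G] is the index of G in S_n. Then there exists a constant C, depending only on n and ε, such that for every real H ≥ 1 the number of tuples (a_1, …, a_n) ∈ ℤ^n with |a_i| ≤ H for 1 ≤ i ≤ n and such that the polynomial f = X^n + a_1X^{n-1} + ⋯ + a_n is separable and has Galois group G is at most C·H^{n-1+δ_G+ε}. -/

import Mathlib

open Polynomial

/-- A monic separable polynomial `f ∈ ℚ[X]` of degree `n` *has Galois group `G`*, for `G` a
subgroup of the symmetric group on `n` letters, if there is a labelling of the `n` distinct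
roots of `f` in its splitting field by `Fin n` such that the subgroup `G` consists exactly of
those permutations of `Fin n` that are induced by elements of the Galois group of the splitting
field of `f` over `ℚ` acting naturally on the roots. -/
def HasGaloisGroup (n : ℕ) (f : Polynomial ℚ) (G : Subgroup (Equiv.Perm (Fin n))) : Prop :=
  ∃ e : Fin n ≃ (f.rootSet f.SplittingField),
    ∀ σ : Equiv.Perm (Fin n), σ ∈ G ↔ ∃ g : f.Gal, ∀ i : Fin n, g • (e i) = e (σ i)

/-!
Let `d = [Sₙ : G]`. For roots `x₁, …, xₙ` of `f`, the `d` sums of `∏ i, x (π i) ^ i` over the left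
cosets of `G` are the roots of the resolvent of `G`, whose coefficients are polynomials in
`a₁, …, aₙ`. If `f` has Galois group `G`, the sum over `G` itself is fixed by the Galois group, so
the resolvent has an integral root `z`. Fix `a₁, …, aₙ₋₁` and let `t = aₙ` vary: then `(t, z)` is an
integral point of a plane curve which is monic of degree `d` in `z`. If this curve is irreducible
over `ℚ`, the determinant method of Bombieri and Pila gives at most `O(H ^ (1 / d + ε))` values of
`t` with `|t| ≤ H`, and summation over `a₁, …, aₙ₋₁` gives the bound.

Here the determinant method is `p`-adic. In a residue class modulo `p` in which the curve is
nonsingular, Hensel's lemma makes `z` a polynomial in `t` up to a high power of `p`, so that the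
interpolation determinants of the integral points in the class are divisible by a power of `p`
exceeding their size. Hence these points lie on a second curve of bounded degree, and a resultant
bounds their number.

The curve is irreducible for all `(a₁, …, aₙ₋₁)` outside the zero set of a nonzero polynomial; by
the Schwartz–Zippel lemma this set contains only `O(H ^ (n - 2))` points, and each contributes at
most `O(H)`. To find the polynomial, put `t = -s ^ (-n)`. By Hensel's lemma `f` has `n` roots which
are Laurent series in `s` with coefficients polynomial in `a₁, …, aₙ₋₁`. A proper factor of the
resolvent corresponds to a proper nonempty set `I` of cosets, and its coefficients would be
polynomials in `t`. This fails for indeterminate `a₁, …, aₙ`: the roots are then algebraically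
independent, and since `Sₙ` permutes the cosets transitively, the product over `I` does not have
coefficients in the ring of symmetric polynomials. So some Laurent coefficient which would have to
vanish is a nonzero polynomial in `a₁, …, aₙ₋₁`; the product of these polynomials over all `I` is
the required one.
-/

open scoped Polynomial.Bivariate

section Determinants

variable {ι : Type*} [Fintype ι] [DecidableEq ι]

theorem choose_card_two_le_sum (S : Finset ℕ) : S.card.choose 2 ≤ ∑ i ∈ S, i := by
  induction S using Finset.induction_on_max with
  | empty => simp
  | insert a S hlt ih =>
    have ha : a ∉ S := fun h ↦ lt_irrefl _ (hlt a h)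
    have hcard : S.card ≤ a := by
      simpa using Finset.card_le_card fun x hx ↦ Finset.mem_range.2 (hlt x hx)
    rw [Finset.card_insert_of_notMem ha, Finset.sum_insert ha, Nat.choose_succ_succ' S.card 1,
      Nat.choose_one_right]
    exact add_le_add hcard ih

/-- Expand the determinant multilinearly along the monomials of the `g j`: a term with a repeated
exponent vanishes, and distinct exponents add up to at least `0 + 1 + ⋯ + (card ι - 1)`. -/
theorem pow_dvd_det_eval_of_dvd {R : Type*} [CommRing R] {p : R} {x : ι → R} (hx : ∀ i, p ∣ x i)
    (g : ι → R[X]) :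
    p ^ (Fintype.card ι).choose 2 ∣ (Matrix.of fun i j ↦ (g j).eval (x i)).det := by
  choose u hu using hx
  let L := (Finset.univ.sup fun j ↦ (g j).natDegree) + 1
  have hrows : (Matrix.of fun i j ↦ (g j).eval (x i)).transpose =
      fun j ↦ ∑ l ∈ Finset.range L, ((g j).coeff l * p ^ l) • fun i ↦ u i ^ l := by
    ext j i
    have hL : (g j).natDegree < L :=
      Nat.lt_succ_of_le (Finset.le_sup (f := fun j ↦ (g j).natDegree) (Finset.mem_univ j))
    simp only [Matrix.transpose_apply, Matrix.of_apply, Finset.sum_apply, Pi.smul_apply,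
      smul_eq_mul, eval_eq_sum_range' hL]
    exact Finset.sum_congr rfl fun l _ ↦ by rw [hu i]; ring
  rw [← Matrix.det_transpose, hrows]
  change _ ∣ (Matrix.detRowAlternating (R := R) (n := ι)).toMultilinearMap _
  rw [MultilinearMap.map_sum_finset]
  refine Finset.dvd_sum fun r _ ↦ ?_
  rw [MultilinearMap.map_smul_univ]
  by_cases hr : Function.Injective r
  · have hsum : (Fintype.card ι).choose 2 ≤ ∑ j, r j := by
      simpa [Finset.card_image_of_injective _ hr, Finset.sum_image hr.injOn]
        using choose_card_two_le_sum (Finset.univ.image r)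
    rw [Finset.prod_mul_distrib, Finset.prod_pow_eq_pow_sum]
    exact ((pow_dvd_pow _ hsum).mul_left _).mul_right _
  · obtain ⟨a, b, hab, hne⟩ := Function.not_injective_iff.1 hr
    have hzero : Matrix.detRowAlternating (R := R) (n := ι) (fun j i ↦ u i ^ r j) = 0 :=
      AlternatingMap.map_eq_zero_of_eq _ _ (i := a) (j := b) (by simp only [hab]) hne
    rw [AlternatingMap.coe_multilinearMap, hzero, smul_zero]
    exact dvd_zero _

theorem pow_dvd_det_of_dvd_sub_eval {R : Type*} [CommRing R] {p : R} {x : ι → R}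
    (hx : ∀ i, p ∣ x i) (g : ι → R[X]) {M : Matrix ι ι R}
    (hM : ∀ i j, p ^ (Fintype.card ι).choose 2 ∣ M i j - (g j).eval (x i)) :
    p ^ (Fintype.card ι).choose 2 ∣ M.det := by
  have hdvd := pow_dvd_det_eval_of_dvd hx g
  rw [← Ideal.mem_span_singleton, ← Ideal.Quotient.eq_zero_iff_mem] at hdvd ⊢
  rw [← hdvd, RingHom.map_det, RingHom.map_det]
  congr 1
  ext i j
  simpa only [RingHom.mapMatrix_apply, Matrix.map_apply, Matrix.of_apply, Ideal.Quotient.eq,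
    Ideal.mem_span_singleton] using hM i j

theorem natDegree_det_le {R : Type*} [CommRing R] {M : Matrix ι ι R[X]} {E : ℕ}
    (h : ∀ i j, (M i j).natDegree ≤ E) : M.det.natDegree ≤ Fintype.card ι * E := by
  rw [Matrix.det_apply]
  refine natDegree_sum_le_of_forall_le _ _ fun σ _ ↦ ?_
  calc (Equiv.Perm.sign σ • ∏ i, M (σ i) i).natDegree
      ≤ (∏ i, M (σ i) i).natDegree := natDegree_smul_le _ _
    _ ≤ ∑ i, (M (σ i) i).natDegree := natDegree_prod_le _ _
    _ ≤ ∑ _i : ι, E := Finset.sum_le_sum fun i _ ↦ h _ _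
    _ = Fintype.card ι * E := by simp

theorem abs_det_le_factorial_mul_prod {R : Type*} [CommRing R] [LinearOrder R]
    [IsStrictOrderedRing R] {M : Matrix ι ι R} {B : ι → R} (h : ∀ i j, |M i j| ≤ B j) :
    |M.det| ≤ (Fintype.card ι).factorial * ∏ j, B j := by
  have hterm (σ : Equiv.Perm ι) : |Equiv.Perm.sign σ • ∏ i, M (σ i) i| ≤ ∏ j, B j := by
    have hsign : |Equiv.Perm.sign σ • ∏ i, M (σ i) i| = |∏ i, M (σ i) i| := by
      rcases Int.units_eq_one_or (Equiv.Perm.sign σ) with h | h <;> simp [h]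
    rw [hsign, Finset.abs_prod]
    exact Finset.prod_le_prod (fun _ _ ↦ abs_nonneg _) fun i _ ↦ h _ _
  rw [Matrix.det_apply]
  calc |∑ σ : Equiv.Perm ι, Equiv.Perm.sign σ • ∏ i, M (σ i) i|
      ≤ ∑ σ : Equiv.Perm ι, |Equiv.Perm.sign σ • ∏ i, M (σ i) i| := Finset.abs_sum_le_sum_abs _ _
    _ ≤ ∑ _σ : Equiv.Perm ι, ∏ j, B j := Finset.sum_le_sum fun σ _ ↦ hterm σ
    _ = (Fintype.card ι).factorial * ∏ j, B j := by simp [Fintype.card_perm]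

theorem exists_ne_zero_forall_dotProduct_eq_zero {K : Type*} [Field K] (S : Set (ι → K))
    (h : ∀ s : ι → ι → K, (∀ i, s i ∈ S) → (Matrix.of s).det = 0) :
    ∃ c : ι → K, c ≠ 0 ∧ ∀ v ∈ S, c ⬝ᵥ v = 0 := by
  have hspan : Submodule.span K S ≠ ⊤ := by
    intro htop
    let b := Module.Basis.ofSpan htop.ge
    let b' := b.reindex (b.indexEquiv (Pi.basisFun K ι))
    have hb'S (i : ι) : b' i ∈ S := by
      rw [Module.Basis.reindex_apply]
      exact Module.Basis.ofSpan_subset htop.ge (Set.mem_range_self _)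
    have hunit : IsUnit (Matrix.of b') :=
      Matrix.linearIndependent_rows_iff_isUnit.1 b'.linearIndependent
    rw [Matrix.isUnit_iff_isUnit_det, h b' hb'S] at hunit
    exact not_isUnit_zero hunit
  obtain ⟨f, hf, hle⟩ := Submodule.exists_le_ker_of_lt_top _ (lt_top_iff_ne_top.2 hspan)
  refine ⟨(dotProductEquiv K ι).symm f, by simpa using hf, fun v hv ↦ ?_⟩
  have hfv : f v = 0 := hle (Submodule.subset_span hv)
  rw [← hfv, ← dotProductEquiv_apply_apply, LinearEquiv.apply_symm_apply]

end Determinants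

section Hensel

variable {R : Type*} [CommRing R]

theorem dvd_sub_newton_step (F : R[X]) {p w y z : R} {k : ℕ}
    (hw : p ∣ w * (derivative F).eval y - 1) (hz : F.eval z = 0) (hzy : p ^ (k + 1) ∣ z - y) :
    p ^ (k + 2) ∣ z - (y - w * F.eval y) := by
  obtain ⟨c, hc⟩ := binomExpansion F y (z - y)
  rw [add_sub_cancel, hz] at hc
  have hfactor : z - (y - w * F.eval y) =
      (z - y) * -((w * (derivative F).eval y - 1) + w * c * (z - y)) := by
    linear_combination -w * hc
  rw [hfactor, pow_succ p (k + 1)]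
  refine mul_dvd_mul hzy (dvd_neg.2 (dvd_add hw (Dvd.dvd.mul_left ?_ _)))
  exact (dvd_pow_self p k.succ_ne_zero).trans hzy

theorem dvd_evalEval_sub_evalEval (Φ : R[X][Y]) {p t t' z z' : R} (ht : p ∣ t - t')
    (hz : p ∣ z - z') : p ∣ evalEval t z Φ - evalEval t' z' Φ := by
  have hfst : p ∣ evalEval t z' Φ - evalEval t' z' Φ := ht.trans (sub_dvd_eval_sub t t' _)
  have hsnd : p ∣ evalEval t z Φ - evalEval t z' Φ := by
    simpa only [map_evalRingHom_eval] using
      hz.trans (sub_dvd_eval_sub z z' (Φ.map (evalRingHom t)))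
  simpa using dvd_add hsnd hfst

theorem eval_eval₂_compRingHom_X_add_C (Φ : R[X][Y]) (t₀ x : R) (g : R[X]) :
    (Φ.eval₂ (compRingHom (X + C t₀)) g).eval x = evalEval (x + t₀) (g.eval x) Φ := by
  induction Φ using Polynomial.induction_on' with
  | add p q hp hq => rw [eval₂_add, eval_add, hp, hq, evalEval_add]
  | monomial n a => simp [evalEval, eval₂_monomial]

/-- Newton's iteration, as in Hensel's lemma, with the ordinate solved for as a polynomial in the
abscissa; `w` is an inverse of `∂Φ/∂Y` modulo `p`. -/
theorem exists_forall_pow_dvd_sub_eval (Φ : R[X][Y]) {p w t₀ z₀ : R}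
    (hw : p ∣ w * evalEval t₀ z₀ (derivative Φ) - 1) (k : ℕ) :
    ∃ g : R[X], ∀ t z : R, p ∣ t - t₀ → p ∣ z - z₀ → evalEval t z Φ = 0 →
      p ^ (k + 1) ∣ z - g.eval (t - t₀) := by
  induction k with
  | zero => exact ⟨C z₀, fun t z _ hz _ ↦ by simpa using hz⟩
  | succ k ih =>
    obtain ⟨g, hg⟩ := ih
    refine ⟨g - C w * Φ.eval₂ (compRingHom (X + C t₀)) g, fun t z ht hz hΦ ↦ ?_⟩
    have hzy := hg t z ht hz hΦ
    have hy : p ∣ g.eval (t - t₀) - z₀ := by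
      simpa using dvd_sub hz ((dvd_pow_self p k.succ_ne_zero).trans hzy)
    rw [eval_sub, eval_mul, eval_C, eval_eval₂_compRingHom_X_add_C, sub_add_cancel,
      ← map_evalRingHom_eval]
    refine dvd_sub_newton_step (Φ.map (evalRingHom t)) ?_ (by rwa [map_evalRingHom_eval]) hzy
    rw [derivative_map, map_evalRingHom_eval]
    have hD := (dvd_evalEval_sub_evalEval (derivative Φ) ht hy).mul_left w
    simpa [mul_sub] using dvd_add hD hw

end Hensel

section CommonZeros

theorem natDegree_resultant_le {R : Type*} [CommRing R] {Φ Q : R[X][Y]} {E : ℕ}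
    (hΦ : ∀ l, (Φ.coeff l).natDegree ≤ E) (hQ : ∀ l, (Q.coeff l).natDegree ≤ E) :
    (resultant Φ Q).natDegree ≤ (Φ.natDegree + Q.natDegree) * E := by
  have hentry (i j) : (sylvester Φ Q Φ.natDegree Q.natDegree i j).natDegree ≤ E := by
    simp only [sylvester, Matrix.of_apply]
    induction j using Fin.addCases with
    | left j => rw [Fin.addCases_left]; split_ifs <;> simp [hQ]
    | right j => rw [Fin.addCases_right]; split_ifs <;> simp [hΦ]
  simpa [resultant] using natDegree_det_le hentry

variable {K : Type*} [Field K] {Φ Q : K[X][Y]}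

theorem resultant_ne_zero_of_irreducible (hm : Φ.Monic) (hi : Irreducible Φ) (hQ : Q ≠ 0)
    (hdeg : Q.natDegree < Φ.natDegree) : resultant Φ Q ≠ 0 := by
  let φ := algebraMap K[X] (FractionRing K[X])
  have hφ : Function.Injective φ := IsFractionRing.injective _ _
  have hirr : Irreducible (Φ.map φ) := hm.irreducible_iff_irreducible_map_fraction_map.1 hi
  intro hres
  have hres' : resultant (Φ.map φ) (Q.map φ) = 0 := by
    rw [natDegree_map_eq_of_injective hφ, natDegree_map_eq_of_injective hφ, resultant_map_map,
      hres, map_zero]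
  refine (resultant_eq_zero_iff.1 hres').2 (hirr.coprime_iff_not_dvd.2 fun hdvd ↦ ?_)
  have hle := natDegree_le_of_dvd hdvd ((Polynomial.map_ne_zero_iff hφ).2 hQ)
  rw [natDegree_map_eq_of_injective hφ, natDegree_map_eq_of_injective hφ] at hle
  omega

theorem card_le_of_common_zeros {E : ℕ} (hm : Φ.Monic) (hi : Irreducible Φ) (hQ : Q ≠ 0)
    (hdeg : Q.natDegree < Φ.natDegree) (hΦE : ∀ l, (Φ.coeff l).natDegree ≤ E)
    (hQE : ∀ l, (Q.coeff l).natDegree ≤ E) (T : Finset K)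
    (hT : ∀ t ∈ T, ∃ z, evalEval t z Φ = 0 ∧ evalEval t z Q = 0) :
    T.card ≤ 2 * Φ.natDegree * E := by
  classical
  have hres := resultant_ne_zero_of_irreducible hm hi hQ hdeg
  have hroot : T ⊆ (resultant Φ Q).roots.toFinset := by
    intro t ht
    obtain ⟨z, hzΦ, hzQ⟩ := hT t ht
    obtain ⟨p, q, -, -, hpq⟩ := exists_mul_add_mul_eq_C_resultant Φ Q le_rfl le_rfl
      (Or.inl (by omega))
    have heval : (resultant Φ Q).eval t = 0 := by
      rw [← evalEval_C t z, ← hpq, evalEval_add, evalEval_mul, evalEval_mul, hzΦ, hzQ]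
      ring
    simpa [hres] using heval
  calc T.card ≤ (resultant Φ Q).roots.toFinset.card := Finset.card_le_card hroot
    _ ≤ (resultant Φ Q).natDegree := (Multiset.toFinset_card_le _).trans (card_roots' _)
    _ ≤ (Φ.natDegree + Q.natDegree) * E := natDegree_resultant_le hΦE hQE
    _ ≤ 2 * Φ.natDegree * E := by gcongr; omega

end CommonZeros

section BoxPolynomial

variable {R : Type*} {m d : ℕ}

/-- The bivariate polynomial `∑ c (i, j) X ^ i Y ^ j`, with exponents in the box
`[0, m) × [0, d)`. -/
noncomputable def boxPolynomial [Semiring R] (c : Fin m × Fin d → R) : R[X][Y] :=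
  ∑ ij : Fin m × Fin d, monomial (ij.2 : ℕ) (monomial (ij.1 : ℕ) (c ij))

theorem coeff_coeff_boxPolynomial [Semiring R] (c : Fin m × Fin d → R) (i : Fin m) (j : Fin d) :
    ((boxPolynomial c).coeff j).coeff i = c (i, j) := by
  rw [boxPolynomial, finsetSum_coeff, finsetSum_coeff, Finset.sum_eq_single (i, j)]
  · simp
  · rintro ⟨a, b⟩ _ hab
    rw [coeff_monomial]
    split_ifs with hb
    · exact coeff_monomial_of_ne _ fun ha ↦ hab (Prod.ext (Fin.ext ha.symm) (Fin.ext hb))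
    · exact coeff_zero _
  · simp

theorem boxPolynomial_ne_zero [Semiring R] {c : Fin m × Fin d → R} (hc : c ≠ 0) :
    boxPolynomial c ≠ 0 := by
  refine fun h ↦ hc (funext fun ⟨i, j⟩ ↦ ?_)
  simp [← coeff_coeff_boxPolynomial c i j, h]

theorem natDegree_boxPolynomial_lt [Semiring R] (c : Fin m × Fin d → R) (hd : 0 < d) :
    (boxPolynomial c).natDegree < d := by
  refine (natDegree_sum_le_of_forall_le _ _ fun ij _ ↦ ?_).trans_lt (Nat.sub_one_lt_of_lt hd)
  exact (natDegree_monomial_le _).trans (Nat.le_sub_one_of_lt ij.2.2)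

theorem natDegree_coeff_boxPolynomial_le [Semiring R] (c : Fin m × Fin d → R) (l : ℕ) :
    ((boxPolynomial c).coeff l).natDegree ≤ m := by
  rw [boxPolynomial, finsetSum_coeff]
  refine natDegree_sum_le_of_forall_le _ _ fun ij _ ↦ ?_
  rw [coeff_monomial]
  split_ifs
  · exact (natDegree_monomial_le _).trans ij.1.2.le
  · simp

theorem evalEval_boxPolynomial [CommSemiring R] (c : Fin m × Fin d → R) (t z : R) :
    evalEval t z (boxPolynomial c) = ∑ ij, c ij * (t ^ (ij.1 : ℕ) * z ^ (ij.2 : ℕ)) := by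
  simp [boxPolynomial, evalEval, eval_finsetSum, mul_assoc]

theorem prod_box_pow_mul_pow [CommMonoid R] (m d : ℕ) (a b : R) :
    ∏ ij : Fin m × Fin d, a ^ (ij.1 : ℕ) * b ^ (ij.2 : ℕ) =
      a ^ (d * m.choose 2) * b ^ (m * d.choose 2) := by
  rw [Finset.prod_mul_distrib, Finset.prod_pow_eq_pow_sum, Finset.prod_pow_eq_pow_sum,
    Fintype.sum_prod_type, Fintype.sum_prod_type]
  simp only [Finset.sum_const, Finset.card_univ, Fintype.card_fin, smul_eq_mul, ← Finset.mul_sum]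
  rw [Fin.sum_univ_eq_sum_range (fun i ↦ i), Fin.sum_univ_eq_sum_range (fun i ↦ i),
    Finset.sum_range_id, Finset.sum_range_id, Nat.choose_two_right, Nat.choose_two_right]

end BoxPolynomial

section RationalModel

/-- The bivariate integer polynomial `Φ` regarded as a polynomial over `ℚ`. -/
noncomputable abbrev mapRat (Φ : ℤ[X][Y]) : ℚ[X][Y] := Φ.map (mapRingHom (Int.castRingHom ℚ))

theorem evalEval_mapRat (Φ : ℤ[X][Y]) (t z : ℤ) :
    evalEval (t : ℚ) (z : ℚ) (mapRat Φ) = (evalEval t z Φ : ℤ) := by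
  simpa using map_mapRingHom_evalEval (Int.castRingHom ℚ) Φ t z

theorem natDegree_mapRat (Φ : ℤ[X][Y]) : (mapRat Φ).natDegree = Φ.natDegree :=
  natDegree_map_eq_of_injective (Polynomial.map_injective _ Int.cast_injective) Φ

theorem natDegree_coeff_mapRat_le (Φ : ℤ[X][Y]) (l : ℕ) :
    ((mapRat Φ).coeff l).natDegree ≤ (Φ.coeff l).natDegree := by
  rw [coeff_map]
  exact natDegree_map_le

theorem natDegree_pos_of_irreducible_mapRat {Φ : ℤ[X][Y]} (hm : Φ.Monic)
    (hi : Irreducible (mapRat Φ)) : 0 < Φ.natDegree := by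
  rw [← natDegree_mapRat]
  exact (hm.map _).natDegree_pos_of_not_isUnit hi.not_isUnit

theorem card_le_of_common_integral_zeros {Φ : ℤ[X][Y]} {Q : ℚ[X][Y]} {E : ℕ} (hm : Φ.Monic)
    (hi : Irreducible (mapRat Φ)) (hQ : Q ≠ 0) (hdeg : Q.natDegree < Φ.natDegree)
    (hΦE : ∀ l, (Φ.coeff l).natDegree ≤ E) (hQE : ∀ l, (Q.coeff l).natDegree ≤ E)
    (T : Finset ℤ) (z : ℤ → ℤ)
    (hT : ∀ t ∈ T, evalEval t (z t) Φ = 0 ∧ evalEval (t : ℚ) (z t : ℚ) Q = 0) :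
    T.card ≤ 2 * Φ.natDegree * E := by
  have hcard := card_le_of_common_zeros (hm.map _) hi hQ (by rwa [natDegree_mapRat])
    (fun l ↦ (natDegree_coeff_mapRat_le Φ l).trans (hΦE l)) hQE
    (T.map ⟨((↑) : ℤ → ℚ), Int.cast_injective⟩) ?_
  · rwa [Finset.card_map, natDegree_mapRat] at hcard
  · simp only [Finset.mem_map, Function.Embedding.coeFn_mk, forall_exists_index, and_imp]
    rintro _ t ht rfl
    exact ⟨z t, by rw [evalEval_mapRat, (hT t ht).1, Int.cast_zero], (hT t ht).2⟩

theorem card_le_of_singular {Φ : ℤ[X][Y]} {E : ℕ} (hm : Φ.Monic) (hi : Irreducible (mapRat Φ))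
    (hE : ∀ l, (Φ.coeff l).natDegree ≤ E) (T : Finset ℤ) (z : ℤ → ℤ)
    (hT : ∀ t ∈ T, evalEval t (z t) Φ = 0 ∧ evalEval t (z t) (derivative Φ) = 0) :
    T.card ≤ 2 * Φ.natDegree * E := by
  have hd := natDegree_pos_of_irreducible_mapRat hm hi
  refine card_le_of_common_integral_zeros (Q := mapRat (derivative Φ)) hm hi ?_ ?_ hE ?_ T z
    fun t ht ↦ ⟨(hT t ht).1, by rw [evalEval_mapRat, (hT t ht).2, Int.cast_zero]⟩
  · rw [← natDegree_mapRat] at hd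
    rw [mapRat, ← derivative_map]
    exact fun h ↦ hd.ne' (derivative_eq_zero.1 h)
  · rw [natDegree_mapRat]
    exact natDegree_derivative_lt hd.ne'
  · intro l
    refine (natDegree_coeff_mapRat_le _ l).trans ?_
    rw [coeff_derivative, ← Nat.cast_add_one]
    refine natDegree_mul_le.trans ?_
    rw [natDegree_natCast, add_zero]
    exact hE (l + 1)

end RationalModel

section IntegralPoints

/-- The pairs `(t, z t)` with `t ∈ T` are integral points of the curve `Φ = 0` in the box
`[-N, N] × [-Z, Z]`. -/
structure AreIntegralPoints (Φ : ℤ[X][Y]) (N Z : ℕ) (T : Finset ℤ) (z : ℤ → ℤ) : Prop where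
  abs_le : ∀ t ∈ T, |t| ≤ N
  abs_ordinate_le : ∀ t ∈ T, |z t| ≤ Z
  evalEval_eq_zero : ∀ t ∈ T, evalEval t (z t) Φ = 0

variable {Φ : ℤ[X][Y]} {E N Z d m p : ℕ} {T : Finset ℤ} {z : ℤ → ℤ}

theorem AreIntegralPoints.mono {S : Finset ℤ} (hT : AreIntegralPoints Φ N Z T z) (hST : S ⊆ T) :
    AreIntegralPoints Φ N Z S z :=
  ⟨fun t ht ↦ hT.abs_le t (hST ht), fun t ht ↦ hT.abs_ordinate_le t (hST ht),
    fun t ht ↦ hT.evalEval_eq_zero t (hST ht)⟩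

/-- The determinant is divisible by `p ^ (m * d).choose 2` by the parametrised Hensel lemma, and
smaller than that by `hbig`. -/
theorem AreIntegralPoints.det_box_eq_zero (hT : AreIntegralPoints Φ N Z T z) (hp : p.Prime)
    {t₀ z₀ : ℤ} (ht₀ : ∀ t ∈ T, (p : ℤ) ∣ t - t₀) (hz₀ : ∀ t ∈ T, (p : ℤ) ∣ z t - z₀)
    (hreg : ¬ (p : ℤ) ∣ evalEval t₀ z₀ (derivative Φ))
    (hbig : (m * d).factorial * (N ^ (d * m.choose 2) * Z ^ (m * d.choose 2)) <
      p ^ (m * d).choose 2)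
    {s : Fin m × Fin d → ℤ} (hs : ∀ i, s i ∈ T) :
    (Matrix.of fun i j : Fin m × Fin d ↦ s i ^ (j.1 : ℕ) * z (s i) ^ (j.2 : ℕ)).det = 0 := by
  set M := Matrix.of fun i j : Fin m × Fin d ↦ s i ^ (j.1 : ℕ) * z (s i) ^ (j.2 : ℕ)
  obtain ⟨a, w, hw⟩ : IsCoprime (p : ℤ) (evalEval t₀ z₀ (derivative Φ)) :=
    (Irreducible.coprime_iff_not_dvd (Nat.prime_iff_prime_int.1 hp).irreducible).2 hreg
  obtain ⟨g, hg⟩ := exists_forall_pow_dvd_sub_eval (p := (p : ℤ)) (w := w) Φ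
    ⟨-a, by linarith⟩ ((m * d).choose 2)
  have hcard : Fintype.card (Fin m × Fin d) = m * d := by simp
  have hdvd : (p : ℤ) ^ (m * d).choose 2 ∣ M.det := by
    rw [← hcard]
    refine pow_dvd_det_of_dvd_sub_eval (x := fun i ↦ s i - t₀) (fun i ↦ ht₀ _ (hs i))
      (fun j ↦ (X + C t₀) ^ (j.1 : ℕ) * g ^ (j.2 : ℕ)) fun i j ↦ ?_
    simp only [M, Matrix.of_apply, eval_mul, eval_pow, eval_add, eval_X, eval_C, sub_add_cancel,
      ← mul_sub, hcard]
    refine (Dvd.dvd.trans ?_ (sub_dvd_pow_sub_pow _ _ _)).mul_left _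
    exact (pow_dvd_pow _ (Nat.le_succ _)).trans
      (hg _ _ (ht₀ _ (hs i)) (hz₀ _ (hs i)) (hT.evalEval_eq_zero _ (hs i)))
  have hle : |M.det| ≤ (m * d).factorial * (N ^ (d * m.choose 2) * Z ^ (m * d.choose 2)) := by
    rw [← hcard, ← prod_box_pow_mul_pow]
    refine abs_det_le_factorial_mul_prod fun i j ↦ ?_
    simp only [M, Matrix.of_apply, abs_mul, abs_pow]
    gcongr
    · exact hT.abs_le _ (hs i)
    · exact hT.abs_ordinate_le _ (hs i)
  exact Int.eq_zero_of_abs_lt_dvd hdvd (hle.trans_lt (mod_cast hbig))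

theorem AreIntegralPoints.exists_boxPolynomial (hT : AreIntegralPoints Φ N Z T z) (hp : p.Prime)
    {t₀ z₀ : ℤ} (ht₀ : ∀ t ∈ T, (p : ℤ) ∣ t - t₀) (hz₀ : ∀ t ∈ T, (p : ℤ) ∣ z t - z₀)
    (hreg : ¬ (p : ℤ) ∣ evalEval t₀ z₀ (derivative Φ))
    (hbig : (m * d).factorial * (N ^ (d * m.choose 2) * Z ^ (m * d.choose 2)) <
      p ^ (m * d).choose 2) :
    ∃ c : Fin m × Fin d → ℚ, c ≠ 0 ∧
      ∀ t ∈ T, evalEval (t : ℚ) (z t : ℚ) (boxPolynomial c) = 0 := by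
  let v (t : ℤ) : Fin m × Fin d → ℚ := fun j ↦ ((t ^ (j.1 : ℕ) * z t ^ (j.2 : ℕ) : ℤ) : ℚ)
  obtain ⟨c, hc, hcv⟩ := exists_ne_zero_forall_dotProduct_eq_zero (v '' T) fun s hs ↦ by
    choose τ hτT hτ using hs
    have hmap : Matrix.of s = (Int.castRingHom ℚ).mapMatrix
        (Matrix.of fun i j : Fin m × Fin d ↦ τ i ^ (j.1 : ℕ) * z (τ i) ^ (j.2 : ℕ)) := by
      ext i j
      simp [← hτ, v]
    rw [hmap, ← RingHom.map_det, hT.det_box_eq_zero hp ht₀ hz₀ hreg hbig hτT, map_zero]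
  refine ⟨c, hc, fun t ht ↦ ?_⟩
  rw [evalEval_boxPolynomial, ← hcv (v t) ⟨t, ht, rfl⟩]
  simp [dotProduct, v]

theorem AreIntegralPoints.card_le_of_congruent (hT : AreIntegralPoints Φ N Z T z) (hp : p.Prime)
    (hm : Φ.Monic) (hi : Irreducible (mapRat Φ)) (hE : ∀ l, (Φ.coeff l).natDegree ≤ E)
    {t₀ z₀ : ℤ} (ht₀ : ∀ t ∈ T, (p : ℤ) ∣ t - t₀) (hz₀ : ∀ t ∈ T, (p : ℤ) ∣ z t - z₀)
    (hreg : ¬ (p : ℤ) ∣ evalEval t₀ z₀ (derivative Φ))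
    (hbig : (m * Φ.natDegree).factorial *
      (N ^ (Φ.natDegree * m.choose 2) * Z ^ (m * Φ.natDegree.choose 2)) <
        p ^ (m * Φ.natDegree).choose 2) :
    T.card ≤ 2 * Φ.natDegree * (E + m) := by
  obtain ⟨c, hc, hcT⟩ := hT.exists_boxPolynomial hp ht₀ hz₀ hreg hbig
  exact card_le_of_common_integral_zeros hm hi (boxPolynomial_ne_zero hc)
    (natDegree_boxPolynomial_lt c (natDegree_pos_of_irreducible_mapRat hm hi))
    (fun l ↦ (hE l).trans (Nat.le_add_right _ _))
    (fun l ↦ (natDegree_coeff_boxPolynomial_le c l).trans (Nat.le_add_left _ _)) T z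
    fun t ht ↦ ⟨hT.evalEval_eq_zero t ht, hcT t ht⟩

theorem AreIntegralPoints.card_image_residues_le (hT : AreIntegralPoints Φ N Z T z)
    (hm : Φ.Monic) [Fact p.Prime] :
    (T.image fun t : ℤ ↦ ((t : ZMod p), (z t : ZMod p))).card ≤ p * Φ.natDegree := by
  let F (τ : ZMod p) : (ZMod p)[X] := Φ.map (eval₂RingHom (Int.castRingHom (ZMod p)) τ)
  have hsub : (T.image fun t : ℤ ↦ ((t : ZMod p), (z t : ZMod p))) ⊆
      (Finset.univ.sigma fun τ ↦ (F τ).roots.toFinset).map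
        (Equiv.sigmaEquivProd _ _).toEmbedding := by
    intro b hb
    obtain ⟨t, ht, rfl⟩ := Finset.mem_image.1 hb
    have hcomp : (eval₂RingHom (Int.castRingHom (ZMod p)) (t : ZMod p)) =
        (Int.castRingHom (ZMod p)).comp (evalRingHom t) := by
      ext <;> simp
    have hroot : (F (t : ZMod p)).eval (z t : ZMod p) = 0 := by
      rw [show F t = (Φ.map (evalRingHom t)).map (Int.castRingHom (ZMod p)) by
        rw [Polynomial.map_map, ← hcomp], eval_intCast_map, Int.cast_id, map_evalRingHom_eval,
        hT.evalEval_eq_zero t ht, map_zero]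
    simpa [(hm.map _).ne_zero, F] using hroot
  calc (T.image fun t : ℤ ↦ ((t : ZMod p), (z t : ZMod p))).card
      ≤ ∑ τ : ZMod p, (F τ).roots.toFinset.card := by
        simpa using Finset.card_le_card hsub
    _ ≤ ∑ _τ : ZMod p, Φ.natDegree := Finset.sum_le_sum fun τ _ ↦
        (Multiset.toFinset_card_le _).trans ((card_roots' _).trans natDegree_map_le)
    _ = p * Φ.natDegree := by simp [ZMod.card]

theorem AreIntegralPoints.card_le_of_forall_not_dvd (hT : AreIntegralPoints Φ N Z T z)
    (hp : p.Prime) (hm : Φ.Monic) (hi : Irreducible (mapRat Φ))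
    (hE : ∀ l, (Φ.coeff l).natDegree ≤ E)
    (hreg : ∀ t ∈ T, ¬ (p : ℤ) ∣ evalEval t (z t) (derivative Φ))
    (hbig : (m * Φ.natDegree).factorial *
      (N ^ (Φ.natDegree * m.choose 2) * Z ^ (m * Φ.natDegree.choose 2)) <
        p ^ (m * Φ.natDegree).choose 2) :
    T.card ≤ 2 * Φ.natDegree * (E + m) * (p * Φ.natDegree) := by
  have := Fact.mk hp
  let f (t : ℤ) : ZMod p × ZMod p := (t, z t)
  refine (Finset.card_le_mul_card_image (f := f) T (2 * Φ.natDegree * (E + m)) ?_).trans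
    (Nat.mul_le_mul_left _ (hT.card_image_residues_le hm))
  intro b hb
  obtain ⟨t₀, ht₀, rfl⟩ := Finset.mem_image.1 hb
  have hcongr : ∀ t ∈ T.filter (f · = f t₀), (p : ℤ) ∣ t - t₀ ∧ (p : ℤ) ∣ z t - z t₀ := by
    intro t ht
    obtain ⟨h₁, h₂⟩ := Prod.ext_iff.1 (Finset.mem_filter.1 ht).2
    exact ⟨(ZMod.intCast_eq_intCast_iff_dvd_sub _ _ _).1 h₁.symm,
      (ZMod.intCast_eq_intCast_iff_dvd_sub _ _ _).1 h₂.symm⟩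
  exact (hT.mono (Finset.filter_subset _ _)).card_le_of_congruent hp hm hi hE
    (fun t ht ↦ (hcongr t ht).1) (fun t ht ↦ (hcongr t ht).2) (hreg t₀ ht₀) hbig

theorem exists_finset_primes {P : ℕ} (hP : P ≠ 0) (r : ℕ) : ∃ S : Finset ℕ, S.card = r ∧
    ∀ p ∈ S, p.Prime ∧ P ≤ p ∧ p ≤ P * 2 ^ r := by
  choose q hq using fun i : ℕ ↦
    Nat.exists_prime_lt_and_le_two_mul (P * 2 ^ i) (by positivity)
  have hmono : StrictMono q := strictMono_nat_of_lt_succ fun i ↦ by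
    calc q i ≤ 2 * (P * 2 ^ i) := (hq i).2.2
      _ = P * 2 ^ (i + 1) := by ring
      _ < q (i + 1) := (hq (i + 1)).2.1
  refine ⟨(Finset.range r).image q, ?_, ?_⟩
  · rw [Finset.card_image_of_injective _ hmono.injective, Finset.card_range]
  · simp only [Finset.mem_image, Finset.mem_range, forall_exists_index, and_imp]
    rintro _ i hi rfl
    refine ⟨(hq i).1, (Nat.le_mul_of_pos_right P (by positivity)).trans (hq i).2.1.le, ?_⟩
    calc q i ≤ 2 * (P * 2 ^ i) := (hq i).2.2
      _ = P * 2 ^ (i + 1) := by ring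
      _ ≤ P * 2 ^ r := Nat.mul_le_mul_left _ (Nat.pow_le_pow_right two_pos hi)

theorem exists_prime_not_dvd {S : Finset ℕ} {P : ℕ} (hS : ∀ p ∈ S, p.Prime ∧ P ≤ p) {D : ℤ}
    (hD : D ≠ 0) (hlt : |D| < P ^ S.card) : ∃ p ∈ S, ¬ (p : ℤ) ∣ D := by
  by_contra! hdvd
  have hprod : (∏ p ∈ S, (p : ℤ)) ∣ D := by
    refine Finset.prod_dvd_of_coprime (fun p hp q hq hpq ↦ ?_) hdvd
    exact Nat.isCoprime_iff_coprime.2 ((Nat.coprime_primes (hS p hp).1 (hS q hq).1).2 hpq)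
  have hle : P ^ S.card ≤ ∏ p ∈ S, p := by
    simpa using Finset.prod_le_prod' (f := fun _ ↦ P) fun p hp ↦ (hS p hp).2
  rw [← Nat.cast_prod] at hprod
  exact hD (Int.eq_zero_of_abs_lt_dvd hprod (hlt.trans_le (mod_cast hle)))

/-- The nonsingular points are distributed over `r` primes exceeding `P`: a nonzero value of
`∂Φ/∂Y` below `P ^ r` is prime to one of them. -/
theorem AreIntegralPoints.card_le (hT : AreIntegralPoints Φ N Z T z) (hm : Φ.Monic)
    (hi : Irreducible (mapRat Φ)) (hE : ∀ l, (Φ.coeff l).natDegree ≤ E) {P r : ℕ} (hP : P ≠ 0)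
    (hder : ∀ t ∈ T, |evalEval t (z t) (derivative Φ)| < P ^ r)
    (hbig : (m * Φ.natDegree).factorial *
      (N ^ (Φ.natDegree * m.choose 2) * Z ^ (m * Φ.natDegree.choose 2)) <
        P ^ (m * Φ.natDegree).choose 2) :
    T.card ≤ 2 * Φ.natDegree * E +
      r * (2 * Φ.natDegree * (E + m) * (P * 2 ^ r * Φ.natDegree)) := by
  obtain ⟨S, rfl, hS⟩ := exists_finset_primes hP r
  let Tsing := T.filter fun t ↦ evalEval t (z t) (derivative Φ) = 0
  let Treg (p : ℕ) := T.filter fun t ↦ ¬ (p : ℤ) ∣ evalEval t (z t) (derivative Φ)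
  have hcover : T ⊆ Tsing ∪ S.biUnion Treg := by
    intro t ht
    by_cases hD : evalEval t (z t) (derivative Φ) = 0
    · exact Finset.mem_union_left _ (Finset.mem_filter.2 ⟨ht, hD⟩)
    · obtain ⟨p, hp, hpD⟩ :=
        exists_prime_not_dvd (fun p hp ↦ ⟨(hS p hp).1, (hS p hp).2.1⟩) hD (hder t ht)
      exact Finset.mem_union_right _
        (Finset.mem_biUnion.2 ⟨p, hp, Finset.mem_filter.2 ⟨ht, hpD⟩⟩)
  have hsing : Tsing.card ≤ 2 * Φ.natDegree * E := card_le_of_singular hm hi hE Tsing z fun t ht ↦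
    ⟨hT.evalEval_eq_zero t (Finset.mem_filter.1 ht).1, (Finset.mem_filter.1 ht).2⟩
  have hreg (p) (hp : p ∈ S) :
      (Treg p).card ≤ 2 * Φ.natDegree * (E + m) * (P * 2 ^ S.card * Φ.natDegree) := by
    obtain ⟨hprime, hPp, hpP⟩ := hS p hp
    refine ((hT.mono (Finset.filter_subset _ _)).card_le_of_forall_not_dvd hprime hm hi hE
      (fun t ht ↦ (Finset.mem_filter.1 ht).2)
      (hbig.trans_le (Nat.pow_le_pow_left hPp _))).trans ?_
    gcongr
  calc T.card ≤ Tsing.card + ∑ p ∈ S, (Treg p).card :=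
        (Finset.card_le_card hcover).trans ((Finset.card_union_le _ _).trans
          (Nat.add_le_add_left Finset.card_biUnion_le _))
    _ ≤ _ := add_le_add hsing (by simpa using Finset.sum_le_card_nsmul S _ _ hreg)

end IntegralPoints

section BombieriPila

theorem abs_le_of_eval_eq_zero {F : ℤ[X]} (hF : F.Monic) {B : ℕ} {z : ℤ}
    (hB : ∀ l, |F.coeff l| ≤ B) (hz : F.eval z = 0) : |z| ≤ B := by
  have hroot : (F.map (Int.castRingHom ℝ)).IsRoot (z : ℝ) := by
    rw [IsRoot.def, eval_intCast_map, Int.cast_id, hz, map_zero]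
  have hcauchy : (F.map (Int.castRingHom ℝ)).cauchyBound ≤ B + 1 := by
    rw [cauchyBound, (hF.map _).leadingCoeff, nnnorm_one, div_one]
    gcongr
    refine Finset.sup_le fun l _ ↦ ?_
    rw [coeff_map, ← NNReal.coe_le_coe]
    simpa using (mod_cast hB l : |((F.coeff l : ℤ) : ℝ)| ≤ B)
  have hnorm : |(z : ℝ)| < B + 1 := by
    simpa [← NNReal.coe_lt_coe] using
      (hroot.norm_lt_cauchyBound (hF.map _).ne_zero).trans_le hcauchy
  exact Int.lt_add_one_iff.1 (mod_cast hnorm)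

theorem abs_eval_derivative_le {R : Type*} [CommRing R] [LinearOrder R] [IsStrictOrderedRing R]
    {F : R[X]} {B Z z : R} (hB : ∀ l, |F.coeff l| ≤ B) (hZ : 1 ≤ Z) (hz : |z| ≤ Z) :
    |(derivative F).eval z| ≤ (F.natDegree : R) ^ 2 * B * Z ^ F.natDegree := by
  have hB0 : 0 ≤ B := (abs_nonneg _).trans (hB 0)
  rw [derivative_eval, sum_over_range' _ (by simp) _ F.natDegree.lt_succ_self,
    Finset.sum_range_succ', Nat.cast_zero, mul_zero, zero_mul, add_zero]
  calc |∑ l ∈ Finset.range F.natDegree, F.coeff (l + 1) * ((l + 1 : ℕ) : R) * z ^ (l + 1 - 1)|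
      ≤ ∑ _l ∈ Finset.range F.natDegree, B * F.natDegree * Z ^ F.natDegree := by
        refine (Finset.abs_sum_le_sum_abs _ _).trans (Finset.sum_le_sum fun l hl ↦ ?_)
        have hl := Finset.mem_range.1 hl
        rw [abs_mul, abs_mul, abs_pow, Nat.abs_cast, Nat.add_sub_cancel]
        have hpow : |z| ^ l ≤ Z ^ F.natDegree :=
          (pow_le_pow_left₀ (abs_nonneg _) hz _).trans (pow_le_pow_right₀ hZ hl.le)
        gcongr
        · exact hB _
        · exact hl
    _ = (F.natDegree : R) ^ 2 * B * Z ^ F.natDegree := by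
        rw [Finset.sum_const, Finset.card_range, nsmul_eq_mul]
        ring

theorem mul_pow_lt_pow_of_mul_rpow_le {N c C P A e : ℕ} {θ : ℝ} (hN : 1 ≤ N) (hc : c < C)
    (hA : A ≠ 0) (he : (e : ℝ) ≤ θ * A) (hP : C * (N : ℝ) ^ θ ≤ P) : c * N ^ e < P ^ A := by
  have hN' : (1 : ℝ) ≤ N := mod_cast hN
  have hC : (1 : ℝ) ≤ C := mod_cast Nat.one_le_of_lt hc
  have hreal : (c : ℝ) * (N : ℝ) ^ e < (P : ℝ) ^ A :=
    calc (c : ℝ) * (N : ℝ) ^ e < C * (N : ℝ) ^ e := by gcongr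
      _ ≤ (C : ℝ) ^ A * (N : ℝ) ^ (θ * A) := by
        rw [← Real.rpow_natCast _ e]
        gcongr
        exact le_self_pow₀ hC hA
      _ = (C * (N : ℝ) ^ θ) ^ A := by rw [mul_pow, ← Real.rpow_mul_natCast (by positivity)]
      _ ≤ (P : ℝ) ^ A := by gcongr
  exact_mod_cast hreal

theorem box_exponent_le {d K m : ℕ} {ε : ℝ} (hd : d ≠ 0) (hε : 0 ≤ ε)
    (hK : K * d ≤ ε * (m - 1)) :
    ((d * m.choose 2 + K * (m * d.choose 2) : ℕ) : ℝ) ≤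
      (1 / d + ε) * ((m * d).choose 2 : ℕ) := by
  have hd1 : (1 : ℝ) ≤ d := mod_cast Nat.one_le_iff_ne_zero.2 hd
  have hinv : 1 / (d : ℝ) ≤ 1 := (div_le_one (by positivity)).2 hd1
  have hhalf : (m : ℝ) - 1 + K * (d - 1) ≤ (1 / d + ε) * (m * d - 1) := by
    have hmul : (1 / (d : ℝ) + ε) * (m * d - 1) = m - 1 / d + ε * (m * d - 1) := by
      field_simp
    have hmd : ε * (m - 1) ≤ ε * (m * d - 1) := by
      gcongr
      exact le_mul_of_one_le_right (by positivity) hd1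
    linarith [(Nat.cast_nonneg K : (0 : ℝ) ≤ K)]
  have hfactor := mul_le_mul_of_nonneg_left hhalf (by positivity : (0 : ℝ) ≤ m * d / 2)
  push_cast [Nat.cast_choose_two]
  linarith

theorem exists_bombieri_pila_parameters {d : ℕ} (hd : d ≠ 0) (K : ℕ) {ε : ℝ} (hε : 0 < ε) :
    ∃ m r c : ℕ, ∀ N : ℕ, 1 ≤ N → ∃ P : ℕ, P ≠ 0 ∧ (P : ℝ) ≤ c * (N : ℝ) ^ (1 / (d : ℝ) + ε) ∧
      d ^ 2 * (K * N ^ K) ^ (d + 1) < P ^ r ∧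
      (m * d).factorial * (N ^ (d * m.choose 2) * (K * N ^ K) ^ (m * d.choose 2)) <
        P ^ (m * d).choose 2 := by
  let m : ℕ := ⌈(K * d / ε : ℝ)⌉₊ + 2
  let r : ℕ := d * (K * (d + 1)) + 1
  let c₀ : ℕ := d ^ 2 * K ^ (d + 1) + (m * d).factorial * K ^ (m * d.choose 2) + 1
  have hr : ((K * (d + 1) : ℕ) : ℝ) ≤ (1 / d + ε) * r := by
    have hone : 1 / (d : ℝ) * (d * (K * (d + 1))) = K * (d + 1) := by field_simp
    have hpos : 0 ≤ 1 / (d : ℝ) + ε * (d * (K * (d + 1)) + 1) := by positivity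
    push_cast [r]
    linarith
  have hmK : (K * d : ℝ) ≤ ε * ((m : ℕ) - 1) := by
    have hceil := (div_le_iff₀ hε).1 (Nat.le_ceil (K * d / ε : ℝ))
    push_cast [m]
    linarith
  have hchoose : (m * d).choose 2 ≠ 0 :=
    Nat.choose_ne_zero (le_mul_of_le_of_one_le (by omega) (Nat.one_le_iff_ne_zero.2 hd))
  refine ⟨m, r, c₀ + 1, fun N hN ↦ ?_⟩
  have hNθ : 1 ≤ (N : ℝ) ^ (1 / (d : ℝ) + ε) := Real.one_le_rpow (mod_cast hN) (by positivity)
  let P : ℕ := ⌈(c₀ : ℝ) * (N : ℝ) ^ (1 / (d : ℝ) + ε)⌉₊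
  have hP : (c₀ : ℝ) * (N : ℝ) ^ (1 / (d : ℝ) + ε) ≤ P := Nat.le_ceil _
  refine ⟨P, (Nat.ceil_pos.2 (by positivity)).ne', ?_, ?_, ?_⟩
  · push_cast
    linarith [Nat.ceil_lt_add_one (a := (c₀ : ℝ) * (N : ℝ) ^ (1 / (d : ℝ) + ε)) (by positivity)]
  · calc d ^ 2 * (K * N ^ K) ^ (d + 1) = d ^ 2 * K ^ (d + 1) * N ^ (K * (d + 1)) := by ring
      _ < P ^ r := mul_pow_lt_pow_of_mul_rpow_le hN (by omega) (Nat.succ_ne_zero _) hr hP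
  · calc (m * d).factorial * (N ^ (d * m.choose 2) * (K * N ^ K) ^ (m * d.choose 2))
        = (m * d).factorial * K ^ (m * d.choose 2) *
            N ^ (d * m.choose 2 + K * (m * d.choose 2)) := by ring
      _ < P ^ (m * d).choose 2 :=
        mul_pow_lt_pow_of_mul_rpow_le hN (by omega) hchoose (box_exponent_le hd hε.le hmK) hP

theorem areIntegralPoints_of_abs_coeff_le {Φ : ℤ[X][Y]} (hm : Φ.Monic) {N B : ℕ} {T : Finset ℤ}
    {z : ℤ → ℤ} (hB : ∀ l, ∀ t ∈ T, |(Φ.coeff l).eval t| ≤ B)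
    (hT : ∀ t ∈ T, |t| ≤ N ∧ evalEval t (z t) Φ = 0) : AreIntegralPoints Φ N B T z where
  abs_le t ht := (hT t ht).1
  abs_ordinate_le t ht := by
    refine abs_le_of_eval_eq_zero (F := Φ.map (evalRingHom t)) (hm.map _) (fun l ↦ ?_) ?_
    · simpa using hB l t ht
    · rw [map_evalRingHom_eval, (hT t ht).2]
  evalEval_eq_zero t ht := (hT t ht).2

theorem AreIntegralPoints.abs_evalEval_derivative_le {Φ : ℤ[X][Y]} {N B : ℕ} {T : Finset ℤ}
    {z : ℤ → ℤ} (hT : AreIntegralPoints Φ N B T z) (hm : Φ.Monic)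
    (hB : ∀ l, ∀ t ∈ T, |(Φ.coeff l).eval t| ≤ B) {t : ℤ} (ht : t ∈ T) :
    |evalEval t (z t) (derivative Φ)| ≤ Φ.natDegree ^ 2 * (B : ℤ) ^ (Φ.natDegree + 1) := by
  have hcoeff (l : ℕ) : |(Φ.map (evalRingHom t)).coeff l| ≤ B := by simpa using hB l t ht
  have hB1 : 1 ≤ (B : ℤ) := by simpa [hm.coeff_natDegree] using hB Φ.natDegree t ht
  have hle := abs_eval_derivative_le hcoeff hB1 (hT.abs_ordinate_le t ht)
  rwa [derivative_map, map_evalRingHom_eval, hm.natDegree_map, mul_assoc, ← pow_succ'] at hle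

theorem bombieri_pila {d : ℕ} (hd : d ≠ 0) (E K : ℕ) {ε : ℝ} (hε : 0 < ε) :
    ∃ c : ℝ, 0 ≤ c ∧ ∀ N : ℕ, 1 ≤ N → ∀ Φ : ℤ[X][Y], Φ.Monic → Φ.natDegree = d →
      Irreducible (mapRat Φ) → (∀ l, (Φ.coeff l).natDegree ≤ E) →
      (∀ l, ∀ t : ℤ, |t| ≤ N → |(Φ.coeff l).eval t| ≤ K * (N : ℤ) ^ K) →
      ∀ T : Finset ℤ, (∀ t ∈ T, |t| ≤ N ∧ ∃ z : ℤ, evalEval t z Φ = 0) →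
      (T.card : ℝ) ≤ c * (N : ℝ) ^ (1 / (d : ℝ) + ε) := by
  obtain ⟨m, r, c, hparam⟩ := exists_bombieri_pila_parameters hd K hε
  let b : ℕ := r * (2 * d * (E + m) * (2 ^ r * d))
  refine ⟨(2 * d * E : ℕ) + b * c, by positivity, fun N hN Φ hm hΦd hi hE hK T hT ↦ ?_⟩
  obtain ⟨P, hP0, hPc, hder, hbig⟩ := hparam N hN
  choose! z hz using fun t ht ↦ (hT t ht).2
  have hB (l) (t) (ht : t ∈ T) : |(Φ.coeff l).eval t| ≤ (K * N ^ K : ℕ) := mod_cast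
    hK l t (hT t ht).1
  have hpoints := areIntegralPoints_of_abs_coeff_le hm hB fun t ht ↦ ⟨(hT t ht).1, hz t ht⟩
  subst hΦd
  have hcard := hpoints.card_le hm hi hE hP0 (r := r) (fun t ht ↦
    (hpoints.abs_evalEval_derivative_le hm hB ht).trans_lt (mod_cast hder)) hbig
  have hNθ : 1 ≤ (N : ℝ) ^ (1 / (Φ.natDegree : ℝ) + ε) :=
    Real.one_le_rpow (mod_cast hN) (by positivity)
  calc (T.card : ℝ) ≤ (2 * Φ.natDegree * E : ℕ) + b * P := by
        refine (Nat.cast_le.2 hcard).trans_eq ?_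
        push_cast [b]
        ring
    _ ≤ (2 * Φ.natDegree * E : ℕ) * (N : ℝ) ^ (1 / (Φ.natDegree : ℝ) + ε) +
          b * (c * (N : ℝ) ^ (1 / (Φ.natDegree : ℝ) + ε)) := by
        gcongr
        exact le_mul_of_one_le_right (Nat.cast_nonneg _) hNθ
    _ = ((2 * Φ.natDegree * E : ℕ) + b * c) * (N : ℝ) ^ (1 / (Φ.natDegree : ℝ) + ε) := by ring

end BombieriPila

section MonicPoly

/-- The monic polynomial `X ^ n + a₀ X ^ (n - 1) + ⋯ + aₙ₋₁`; thus `a i` is the coefficient of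
`X ^ (n - 1 - i)`. -/
noncomputable def monicPoly {n : ℕ} {S : Type*} [CommRing S] (a : Fin n → S) : S[X] :=
  X ^ n + ∑ i : Fin n, C (a i) * X ^ (n - 1 - (i : ℕ))

variable {n : ℕ} {R S : Type*} [CommRing R] [CommRing S] (a : Fin n → S)

theorem degree_sum_C_mul_X_pow_lt :
    (∑ i : Fin n, C (a i) * X ^ (n - 1 - (i : ℕ))).degree < (n : WithBot ℕ) := by
  refine (degree_sum_le _ _).trans_lt ((Finset.sup_lt_iff (WithBot.bot_lt_coe n)).2 fun i _ ↦ ?_)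
  refine (degree_C_mul_X_pow_le _ _).trans_lt ?_
  exact WithBot.coe_lt_coe.2 (by omega : n - 1 - (i : ℕ) < n)

theorem monic_monicPoly : (monicPoly a).Monic :=
  monic_X_pow_add (degree_sum_C_mul_X_pow_lt a)

theorem natDegree_monicPoly [Nontrivial S] : (monicPoly a).natDegree = n := by
  rw [monicPoly, natDegree_add_eq_left_of_degree_lt, natDegree_X_pow]
  rw [degree_X_pow]
  exact degree_sum_C_mul_X_pow_lt a

theorem coeff_monicPoly (i : Fin n) : (monicPoly a).coeff (n - 1 - i) = a i := by
  rw [monicPoly, coeff_add, coeff_X_pow, if_neg (by omega), zero_add, finsetSum_coeff,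
    Finset.sum_eq_single i]
  · simp
  · intro j _ hj
    rw [coeff_C_mul_X_pow, if_neg]
    exact fun h ↦ hj (Fin.ext (by omega))
  · simp

theorem map_monicPoly (f : S →+* R) : (monicPoly a).map f = monicPoly (f ∘ a) := by
  simp [monicPoly, Polynomial.map_sum]

theorem eval_monicPoly (x : S) :
    (monicPoly a).eval x = x ^ n + ∑ i : Fin n, a i * x ^ (n - 1 - (i : ℕ)) := by
  simp [monicPoly, eval_finsetSum]

theorem eval_monicPoly_snoc {k : ℕ} (b : Fin k → S) (t x : S) :
    (monicPoly (Fin.snoc b t : Fin (k + 1) → S)).eval x =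
      x ^ (k + 1) + ∑ i : Fin k, b i * x ^ (k - (i : ℕ)) + t := by
  simp [eval_monicPoly, Fin.sum_univ_castSucc, add_assoc]

theorem eq_prod_X_sub_C_of_injective [IsDomain S] {g : S[X]} (hg : g.Monic) {x : Fin n → S}
    (hx : Function.Injective x) (hr : ∀ i, g.IsRoot (x i)) (hn : g.natDegree = n) :
    g = ∏ i, (X - C (x i)) := by
  have hroots : g.roots = Finset.univ.val.map x := by
    refine (Multiset.eq_of_le_of_card_le ?_ ?_).symm
    · refine (Multiset.le_iff_subset (Finset.univ.nodup.map hx)).2 fun y hy ↦ ?_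
      obtain ⟨i, -, rfl⟩ := Multiset.mem_map.1 hy
      exact (mem_roots hg.ne_zero).2 (hr i)
    · simpa [hn] using g.card_roots'
  have hcard : g.roots.card = g.natDegree := by simp [hroots, hn]
  conv_lhs => rw [← prod_multiset_X_sub_C_of_monic_of_roots_card_eq hg hcard, hroots,
    Multiset.map_map]
  rfl

end MonicPoly

section SymmetricPolynomials

variable {n : ℕ}

/-- The polynomial `(-1) ^ (i + 1) e_{i + 1}`, where `e_j` is the `j`-th elementary symmetric
polynomial; by Vieta it is the `i`-th coefficient, in the indexing of `monicPoly`, of the polynomial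
whose roots are the variables. -/
noncomputable def signedEsymm (n : ℕ) (K : Type*) [CommRing K] (i : Fin n) :
    MvPolynomial (Fin n) K :=
  (-1) ^ ((i : ℕ) + 1) * MvPolynomial.esymm (Fin n) K (i + 1)

section CommRing

variable {K S : Type*} [CommRing K] [CommRing S] [Algebra K S] {a x : Fin n → S}

theorem aeval_signedEsymm (h : monicPoly a = ∏ i, (X - C (x i))) (i : Fin n) :
    MvPolynomial.aeval x (signedEsymm n K i) = a i := by
  have hprod : ∏ i, (X - C (x i)) = ((Finset.univ.val.map x).map fun t ↦ X - C t).prod := by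
    rw [Multiset.map_map]
    rfl
  have hcard : Multiset.card (Finset.univ.val.map x) = n := by simp
  rw [← coeff_monicPoly a i, h, hprod, Multiset.prod_X_sub_C_coeff _ (by omega), hcard,
    show n - (n - 1 - (i : ℕ)) = i + 1 by omega, ← MvPolynomial.aeval_esymm_eq_multiset_esymm _ K]
  simp [signedEsymm]

theorem aeval_aeval_signedEsymm (h : monicPoly a = ∏ i, (X - C (x i)))
    (p : MvPolynomial (Fin n) K) :
    MvPolynomial.aeval x (MvPolynomial.aeval (signedEsymm n K) p) = MvPolynomial.aeval a p := by
  rw [← AlgHom.comp_apply, MvPolynomial.comp_aeval]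
  simp only [aeval_signedEsymm h]

theorem isSymmetric_aeval_signedEsymm (p : MvPolynomial (Fin n) K) :
    (MvPolynomial.aeval (signedEsymm n K) p).IsSymmetric := by
  intro ρ
  rw [← AlgHom.comp_apply, MvPolynomial.comp_aeval]
  congr 2 with i : 1
  simp [signedEsymm, MvPolynomial.rename_esymm]

theorem exists_aeval_signedEsymm_eq {p : MvPolynomial (Fin n) K} (hp : p.IsSymmetric) :
    ∃ q : MvPolynomial (Fin n) K, MvPolynomial.aeval (signedEsymm n K) q = p := by
  obtain ⟨q, hq⟩ := MvPolynomial.esymmAlgHom_surjective (R := K) (σ := Fin n) (n := n) (by simp)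
    ⟨p, hp⟩
  have hq' : MvPolynomial.aeval (fun i : Fin n ↦ MvPolynomial.esymm (Fin n) K (i + 1)) q = p := by
    rw [← MvPolynomial.esymmAlgHom_apply, hq]
  refine ⟨MvPolynomial.aeval (fun i : Fin n ↦ (-1) ^ ((i : ℕ) + 1) * MvPolynomial.X i) q, ?_⟩
  rw [← hq', ← AlgHom.comp_apply, MvPolynomial.comp_aeval]
  congr 2 with i : 1
  simp [signedEsymm, ← mul_assoc, ← mul_pow]

end CommRing

/-- An algebraic relation between the roots would, after multiplication with all its conjugates
under permutations of the variables, be one between the coefficients. -/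
theorem algebraicIndependent_of_monicPoly_eq_prod {K S : Type*} [CommRing K] [IsDomain K]
    [CommRing S] [Algebra K S] {a x : Fin n → S} (ha : AlgebraicIndependent K a)
    (h : monicPoly a = ∏ i, (X - C (x i))) : AlgebraicIndependent K x := by
  refine (injective_iff_map_eq_zero (MvPolynomial.aeval (R := K) x)).2 fun p hp ↦ ?_
  let norm : MvPolynomial (Fin n) K := ∏ σ : Equiv.Perm (Fin n), MvPolynomial.rename σ p
  have hsymm : norm.IsSymmetric := fun ρ ↦ by
    simp only [norm, map_prod, MvPolynomial.rename_rename]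
    exact Fintype.prod_equiv (Equiv.mulLeft ρ) _ _ fun σ ↦ rfl
  have hnorm : MvPolynomial.aeval x norm = 0 := by
    simp only [norm, map_prod]
    refine Finset.prod_eq_zero (Finset.mem_univ 1) ?_
    rw [Equiv.Perm.coe_one, MvPolynomial.rename_id_apply, hp]
  obtain ⟨q, hq⟩ := exists_aeval_signedEsymm_eq hsymm
  rw [← hq, aeval_aeval_signedEsymm h] at hnorm
  have hq0 : q = 0 := ha.eq_zero_of_aeval_eq_zero q hnorm
  obtain ⟨σ, -, hσ⟩ := Finset.prod_eq_zero_iff.1 (show norm = 0 by rw [← hq, hq0, map_zero])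
  exact MvPolynomial.rename_injective σ σ.injective (hσ.trans (map_zero _).symm)

end SymmetricPolynomials

section OrbitSums

variable {n : ℕ} (G : Subgroup (Equiv.Perm (Fin n)))

noncomputable instance fintypeCosets : Fintype (Equiv.Perm (Fin n) ⧸ G) := Fintype.ofFinite _

open scoped Classical in
/-- The sum of the products `∏ i, x (π i) ^ i` over the permutations `π` in the left coset `q`.
For the trivial coset this is the orbit sum under `G` of the monomial `∏ i, x i ^ i`, and
permuting the entries of `x` permutes the orbit sums as it permutes the cosets. -/
noncomputable def orbitSum {S : Type*} [CommSemiring S] (x : Fin n → S)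
    (q : Equiv.Perm (Fin n) ⧸ G) : S :=
  ∑ π ∈ Finset.univ.filter fun π : Equiv.Perm (Fin n) ↦ (π : Equiv.Perm (Fin n) ⧸ G) = q,
    ∏ i, x (π i) ^ (i : ℕ)

theorem map_orbitSum {S T F : Type*} [CommSemiring S] [CommSemiring T] [FunLike F S T]
    [RingHomClass F S T] (f : F) (x : Fin n → S) (q : Equiv.Perm (Fin n) ⧸ G) :
    f (orbitSum G x q) = orbitSum G (f ∘ x) q := by
  simp [orbitSum]

theorem orbitSum_comp_perm {S : Type*} [CommSemiring S] (x : Fin n → S) (ρ : Equiv.Perm (Fin n))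
    (q : Equiv.Perm (Fin n) ⧸ G) : orbitSum G (x ∘ ρ) q = orbitSum G x (ρ • q) := by
  refine Finset.sum_equiv (Equiv.mulLeft ρ) (fun π ↦ ?_) fun π _ ↦ by simp
  simp only [Finset.mem_filter_univ, Equiv.coe_mulLeft, ← smul_left_cancel_iff ρ (y := q)]
  rfl

/-- The exponent vector of the monomial `∏ i, X (π i) ^ i`. -/
noncomputable def permExponent (π : Equiv.Perm (Fin n)) : Fin n →₀ ℕ :=
  Finsupp.equivFunOnFinite.symm fun j ↦ (π⁻¹ j : ℕ)

theorem permExponent_injective : Function.Injective (permExponent (n := n)) := by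
  intro π π' h
  refine inv_injective (Equiv.ext fun j ↦ Fin.ext ?_)
  exact congrFun (Finsupp.equivFunOnFinite.symm.injective h) j

theorem prod_X_pow_eq_monomial_permExponent {R : Type*} [CommSemiring R]
    (π : Equiv.Perm (Fin n)) :
    ∏ i, (MvPolynomial.X (π i) : MvPolynomial (Fin n) R) ^ (i : ℕ) =
      MvPolynomial.monomial (permExponent π) 1 := by
  rw [MvPolynomial.monomial_eq, Finsupp.prod_fintype _ _ (by simp), map_one, one_mul,
    ← Equiv.prod_comp π fun j ↦ MvPolynomial.X j ^ permExponent π j]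
  simp [permExponent]

open scoped Classical in
theorem coeff_permExponent_orbitSum {R : Type*} [CommSemiring R] (π : Equiv.Perm (Fin n))
    (q : Equiv.Perm (Fin n) ⧸ G) :
    (orbitSum G (MvPolynomial.X : Fin n → MvPolynomial (Fin n) R) q).coeff (permExponent π) =
      if (π : Equiv.Perm (Fin n) ⧸ G) = q then 1 else 0 := by
  simp [orbitSum, prod_X_pow_eq_monomial_permExponent, MvPolynomial.coeff_sum,
    MvPolynomial.coeff_monomial, permExponent_injective.eq_iff, Finset.sum_ite_eq']

theorem orbitSum_X_injective {R : Type*} [CommSemiring R] [Nontrivial R] :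
    Function.Injective (orbitSum G (MvPolynomial.X : Fin n → MvPolynomial (Fin n) R)) := by
  classical
  intro q q' h
  obtain ⟨π, rfl⟩ := QuotientGroup.mk_surjective q
  have hcoeff := coeff_permExponent_orbitSum (R := R) G π (π : Equiv.Perm (Fin n) ⧸ G)
  rw [h, coeff_permExponent_orbitSum] at hcoeff
  by_contra hne
  simp [hne] at hcoeff

end OrbitSums

section Resolvent

variable {n : ℕ} (G : Subgroup (Equiv.Perm (Fin n)))

/-- The polynomial whose roots are the orbit sums of `x` indexed by the set of cosets `I`. -/
noncomputable def orbitPolynomial {S : Type*} [CommRing S] (x : Fin n → S)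
    (I : Finset (Equiv.Perm (Fin n) ⧸ G)) : S[X] :=
  ∏ q ∈ I, (X - C (orbitSum G x q))

theorem monic_orbitPolynomial {S : Type*} [CommRing S] (x : Fin n → S)
    (I : Finset (Equiv.Perm (Fin n) ⧸ G)) : (orbitPolynomial G x I).Monic :=
  monic_prod_of_monic _ _ fun _ _ ↦ monic_X_sub_C _

theorem natDegree_orbitPolynomial_univ {S : Type*} [CommRing S] [Nontrivial S] (x : Fin n → S) :
    (orbitPolynomial G x Finset.univ).natDegree = G.index := by
  rw [orbitPolynomial, natDegree_prod_of_monic _ _ fun _ _ ↦ monic_X_sub_C _]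
  simp [Subgroup.index]

theorem eval_orbitPolynomial_eq_zero {S : Type*} [CommRing S] (x : Fin n → S)
    {I : Finset (Equiv.Perm (Fin n) ⧸ G)} {q : Equiv.Perm (Fin n) ⧸ G} (hq : q ∈ I) :
    (orbitPolynomial G x I).eval (orbitSum G x q) = 0 := by
  rw [orbitPolynomial, eval_prod]
  exact Finset.prod_eq_zero hq (by simp)

theorem map_orbitPolynomial {S T : Type*} [CommRing S] [CommRing T] (f : S →+* T) (x : Fin n → S)
    (I : Finset (Equiv.Perm (Fin n) ⧸ G)) :
    (orbitPolynomial G x I).map f = orbitPolynomial G (f ∘ x) I := by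
  simp only [orbitPolynomial, Polynomial.map_prod, Polynomial.map_sub, map_X, map_C,
    map_orbitSum G f]

theorem map_aeval_orbitPolynomial {K S : Type*} [CommRing K] [CommRing S] [Algebra K S]
    (x : Fin n → S) (I : Finset (Equiv.Perm (Fin n) ⧸ G)) :
    (orbitPolynomial G MvPolynomial.X I).map (MvPolynomial.aeval (R := K) x).toRingHom =
      orbitPolynomial G x I := by
  rw [map_orbitPolynomial]
  congr 1
  ext1 i
  simp

theorem map_rename_orbitPolynomial (K : Type*) [CommRing K] (ρ : Equiv.Perm (Fin n))
    (I : Finset (Equiv.Perm (Fin n) ⧸ G)) :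
    (orbitPolynomial G MvPolynomial.X I).map (MvPolynomial.rename (R := K) ρ).toRingHom =
      orbitPolynomial G (MvPolynomial.X ∘ ρ) I := by
  rw [map_orbitPolynomial]
  congr 1
  ext1 i
  simp

theorem orbitPolynomial_univ_comp_perm {S : Type*} [CommRing S] (x : Fin n → S)
    (ρ : Equiv.Perm (Fin n)) :
    orbitPolynomial G (x ∘ ρ) Finset.univ = orbitPolynomial G x Finset.univ := by
  simp only [orbitPolynomial, orbitSum_comp_perm]
  exact Equiv.prod_comp (MulAction.toPerm ρ) fun q ↦ X - C (orbitSum G x q)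

theorem isSymmetric_coeff_orbitPolynomial_univ (K : Type*) [CommRing K] (l : ℕ) :
    ((orbitPolynomial G (MvPolynomial.X : Fin n → MvPolynomial (Fin n) K) Finset.univ).coeff
      l).IsSymmetric := by
  intro ρ
  conv_rhs => rw [← orbitPolynomial_univ_comp_perm G _ ρ, ← map_rename_orbitPolynomial, coeff_map]
  rfl

theorem exists_monic_map_aeval_signedEsymm (K : Type*) [CommRing K] [Nontrivial K] :
    ∃ Ψ : (MvPolynomial (Fin n) K)[X], Ψ.Monic ∧ Ψ.natDegree = G.index ∧
      Ψ.map (MvPolynomial.aeval (R := K) (signedEsymm n K)).toRingHom =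
        orbitPolynomial G MvPolynomial.X Finset.univ := by
  have hlift : orbitPolynomial G MvPolynomial.X Finset.univ ∈
      lifts (MvPolynomial.aeval (R := K) (signedEsymm n K)).toRingHom :=
    (lifts_iff_coeff_lifts _).2 fun l ↦
      exists_aeval_signedEsymm_eq (isSymmetric_coeff_orbitPolynomial_univ G K l)
  obtain ⟨Ψ, hmap, hdeg, hmonic⟩ :=
    lifts_and_natDegree_eq_and_monic hlift (monic_orbitPolynomial G _ _)
  exact ⟨Ψ, hmonic, hdeg.trans (natDegree_orbitPolynomial_univ G _), hmap⟩

/-- The resolvent of `G`, with coefficients in the ring of polynomials in the coefficients of a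
generic monic polynomial of degree `n`: its specialisation at a monic polynomial with roots `x` has
the orbit sums of `x` as its roots, see `map_galoisResolvent`. -/
noncomputable def galoisResolvent : (MvPolynomial (Fin n) ℤ)[X] :=
  (exists_monic_map_aeval_signedEsymm G ℤ).choose

theorem monic_galoisResolvent : (galoisResolvent G).Monic :=
  (exists_monic_map_aeval_signedEsymm G ℤ).choose_spec.1

theorem natDegree_galoisResolvent : (galoisResolvent G).natDegree = G.index :=
  (exists_monic_map_aeval_signedEsymm G ℤ).choose_spec.2.1

theorem map_galoisResolvent {S : Type*} [CommRing S] (f : MvPolynomial (Fin n) ℤ →+* S)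
    {x : Fin n → S} (h : monicPoly (f ∘ MvPolynomial.X) = ∏ i, (X - C (x i))) :
    (galoisResolvent G).map f = orbitPolynomial G x Finset.univ := by
  have hf : f = (MvPolynomial.aeval (R := ℤ) x).toRingHom.comp
      (MvPolynomial.aeval (R := ℤ) (signedEsymm n ℤ)).toRingHom := by
    refine MvPolynomial.ringHom_ext' (Subsingleton.elim _ _) fun i ↦ ?_
    simp [aeval_signedEsymm h]
  rw [hf, ← Polynomial.map_map, galoisResolvent,
    (exists_monic_map_aeval_signedEsymm G ℤ).choose_spec.2.2, map_aeval_orbitPolynomial]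

end Resolvent

section Irreducibility

variable {n : ℕ} {G : Subgroup (Equiv.Perm (Fin n))}

theorem eq_univ_of_forall_map_rename_orbitPolynomial_eq {K : Type*} [CommRing K] [IsDomain K]
    {I : Finset (Equiv.Perm (Fin n) ⧸ G)} (hI : I.Nonempty)
    (h : ∀ ρ : Equiv.Perm (Fin n),
      (orbitPolynomial G (MvPolynomial.X : Fin n → MvPolynomial (Fin n) K) I).map
        (MvPolynomial.rename (R := K) ρ).toRingHom = orbitPolynomial G MvPolynomial.X I) :
    I = Finset.univ := by
  obtain ⟨q₀, hq₀⟩ := hI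
  refine Finset.eq_univ_iff_forall.2 fun q ↦ ?_
  obtain ⟨ρ, rfl⟩ := MulAction.exists_smul_eq (Equiv.Perm (Fin n)) q₀ q
  have hroot : (orbitPolynomial G (MvPolynomial.X : Fin n → MvPolynomial (Fin n) K) I).eval
      (orbitSum G MvPolynomial.X (ρ • q₀)) = 0 := by
    rw [← h ρ, map_rename_orbitPolynomial, ← orbitSum_comp_perm]
    exact eval_orbitPolynomial_eq_zero G _ hq₀
  rw [orbitPolynomial, eval_prod] at hroot
  obtain ⟨q, hq, hzero⟩ := Finset.prod_eq_zero_iff.1 hroot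
  rw [eval_sub, eval_X, eval_C, sub_eq_zero] at hzero
  rwa [orbitSum_X_injective G hzero]

theorem eq_univ_of_orbitPolynomial_mem_lifts {K S : Type*} [CommRing K] [IsDomain K] [CommRing S]
    [Algebra K S] {a x : Fin n → S} (ha : AlgebraicIndependent K a)
    (h : monicPoly a = ∏ i, (X - C (x i))) {I : Finset (Equiv.Perm (Fin n) ⧸ G)}
    (hI : I.Nonempty)
    (hlift : orbitPolynomial G x I ∈ lifts (MvPolynomial.aeval (R := K) a).toRingHom) :
    I = Finset.univ := by
  refine eq_univ_of_forall_map_rename_orbitPolynomial_eq (K := K) hI fun ρ ↦ ?_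
  have hx : AlgebraicIndependent K x := algebraicIndependent_of_monicPoly_eq_prod ha h
  ext1 l
  obtain ⟨p, hp⟩ := (lifts_iff_coeff_lifts _).1 hlift l
  have hcoeff : MvPolynomial.aeval (signedEsymm n K) p =
      (orbitPolynomial G MvPolynomial.X I).coeff l := by
    refine hx ?_
    rw [aeval_aeval_signedEsymm h]
    rw [← map_aeval_orbitPolynomial (K := K), coeff_map] at hp
    exact hp
  rw [coeff_map, ← hcoeff]
  exact isSymmetric_aeval_signedEsymm p ρ

theorem exists_eq_prod_X_sub_C_of_mul_eq_prod {D ι : Type*} [CommRing D] [IsDomain D] [Fintype ι]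
    {z : ι → D} {A B : D[X]} (hA : A.Monic) (h : A * B = ∏ q, (X - C (z q)))
    (hA0 : A.natDegree ≠ 0) (hB0 : B.natDegree ≠ 0) :
    ∃ I : Finset ι, I.Nonempty ∧ I ≠ Finset.univ ∧ A = ∏ q ∈ I, (X - C (z q)) := by
  classical
  have hmonic : ∀ s : Finset ι, (∏ q ∈ s, (X - C (z q))).Monic := fun s ↦
    monic_prod_of_monic _ _ fun i _ ↦ monic_X_sub_C _
  obtain ⟨I, J, b, c, -, hdisj, hbc, rfl, rfl⟩ := mul_eq_mul_prime_prod (x := A) (y := B) (a := 1)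
    (s := Finset.univ) (fun i _ ↦ prime_X_sub_C (z i)) (by rw [one_mul, h])
  have hb : b = 1 := ((hmonic I).of_mul_monic_right hA).eq_one_of_isUnit
    (IsUnit.of_mul_eq_one _ hbc.symm)
  rw [hb, one_mul] at hA0 ⊢
  refine ⟨I, Finset.nonempty_iff_ne_empty.2 ?_, ?_, rfl⟩
  · rintro rfl
    simp at hA0
  · rintro rfl
    have hJ : J = ∅ := Finset.disjoint_self_iff_empty J |>.1 (hdisj.mono_left J.subset_univ)
    have hc : c = 1 := by rw [hbc, hb, one_mul]
    simp [hJ, hc] at hB0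

theorem irreducible_of_forall_notMem_lifts {A D ι : Type*} [CommRing A] [IsDomain A] [CommRing D]
    [IsDomain D] [Fintype ι] [Nonempty ι] (f : A →+* D) {P : A[X]} (hP : P.Monic) {z : ι → D}
    (h : P.map f = ∏ q, (X - C (z q)))
    (hI : ∀ I : Finset ι, I.Nonempty → I ≠ Finset.univ → ∏ q ∈ I, (X - C (z q)) ∉ lifts f) :
    Irreducible P := by
  refine hP.irreducible_iff_natDegree.2 ⟨?_, fun Q R hQ hR hQR ↦ ?_⟩
  · rintro rfl
    have hdeg := congrArg natDegree h
    rw [natDegree_prod_of_monic _ _ fun _ _ ↦ monic_X_sub_C _] at hdeg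
    simp [eq_comm] at hdeg
  · by_contra! hdeg
    obtain ⟨I, hne, huniv, hQI⟩ := exists_eq_prod_X_sub_C_of_mul_eq_prod (hQ.map f)
      (by rw [← Polynomial.map_mul, hQR, h]) (by rw [hQ.natDegree_map]; exact hdeg.1)
      (by rw [hR.natDegree_map]; exact hdeg.2)
    exact hI I hne huniv ((mem_lifts _).2 ⟨Q, hQI⟩)

end Irreducibility

section LaurentRoots

theorem exists_isRoot_constantCoeff_eq {R : Type*} [CommRing R] {g : (PowerSeries R)[X]}
    (hg : g.Monic) {b : R} (hb : (g.map PowerSeries.constantCoeff).IsRoot b)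
    (hb' : IsUnit ((g.map PowerSeries.constantCoeff).derivative.eval b)) :
    ∃ y : PowerSeries R, g.IsRoot y ∧ PowerSeries.constantCoeff y = b := by
  have heval : ∀ f : (PowerSeries R)[X], PowerSeries.constantCoeff (f.eval (PowerSeries.C b)) =
      (f.map PowerSeries.constantCoeff).eval b := fun f ↦ by
    rw [eval_map, ← eval₂_hom, PowerSeries.constantCoeff_C]
  have hmem : ∀ f : PowerSeries R,
      f ∈ Ideal.span {(PowerSeries.X : PowerSeries R)} ↔ PowerSeries.constantCoeff f = 0 :=
    fun f ↦ by rw [Ideal.mem_span_singleton, PowerSeries.X_dvd_iff]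
  have hunit : IsUnit (g.derivative.eval (PowerSeries.C b)) := by
    rwa [PowerSeries.isUnit_iff_constantCoeff, heval, ← derivative_map]
  obtain ⟨y, hy, hyb⟩ := HenselianRing.is_henselian
    (I := Ideal.span {(PowerSeries.X : PowerSeries R)}) g hg (PowerSeries.C b)
    ((hmem _).2 ((heval g).trans hb)) (hunit.map _)
  exact ⟨y, hy, by simpa [sub_eq_zero] using (hmem _).1 hyb⟩

variable {R : Type*} [CommRing R] {k : ℕ}

theorem exists_injective_isRoot_powerSeries [IsDomain R] {ζ : R} (hζ : IsPrimitiveRoot ζ (k + 1))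
    (hk : IsUnit ((k + 1 : ℕ) : R)) (A : Fin k → R) :
    ∃ y : Fin (k + 1) → PowerSeries R, Function.Injective y ∧ ∀ j, (monicPoly
      (Fin.snoc (fun i ↦ PowerSeries.C (A i) * PowerSeries.X ^ ((i : ℕ) + 1)) (-1) :
        Fin (k + 1) → PowerSeries R)).IsRoot (y j) := by
  set g := monicPoly (Fin.snoc (fun i ↦ PowerSeries.C (A i) * PowerSeries.X ^ ((i : ℕ) + 1)) (-1) :
    Fin (k + 1) → PowerSeries R)
  have hconst : g.map PowerSeries.constantCoeff = X ^ (k + 1) - 1 := by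
    simp [g, monicPoly, Polynomial.map_sum, Fin.sum_univ_castSucc, sub_eq_add_neg]
  have hpow : ∀ j : Fin (k + 1), (ζ ^ (j : ℕ)) ^ (k + 1) = 1 := fun j ↦ by
    rw [← pow_mul, mul_comm, pow_mul, hζ.pow_eq_one, one_pow]
  have hroot : ∀ j : Fin (k + 1),
      ∃ y, g.IsRoot y ∧ PowerSeries.constantCoeff y = ζ ^ (j : ℕ) := fun j ↦ by
    refine exists_isRoot_constantCoeff_eq (monic_monicPoly _) ?_ ?_
    · simp [hconst, hpow]
    · have hζj : IsUnit (ζ ^ (j : ℕ)) := IsUnit.of_pow_eq_one (hpow j) k.succ_ne_zero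
      simpa [hconst] using hk.mul (hζj.pow k)
  choose y hy hyζ using hroot
  refine ⟨y, fun i j hij ↦ Fin.ext (hζ.pow_inj i.2 j.2 ?_), hy⟩
  rw [← hyζ, hij, hyζ]

theorem eval_monicPoly_single_mul_ofPowerSeries (A : Fin k → R) (y : PowerSeries R) :
    (monicPoly (Fin.snoc (HahnSeries.C ∘ A) (HahnSeries.single (-((k + 1 : ℕ) : ℤ)) (-1)) :
        Fin (k + 1) → LaurentSeries R)).eval
        (HahnSeries.single (-1) 1 * HahnSeries.ofPowerSeries ℤ R y) =
      HahnSeries.single (-1) 1 ^ (k + 1) * HahnSeries.ofPowerSeries ℤ R ((monicPoly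
        (Fin.snoc (fun i ↦ PowerSeries.C (A i) * PowerSeries.X ^ ((i : ℕ) + 1)) (-1) :
          Fin (k + 1) → PowerSeries R)).eval y) := by
  set v : LaurentSeries R := HahnSeries.single (-1) 1
  set u : LaurentSeries R := HahnSeries.single 1 1 with hu
  have hvu : v * u = 1 := by simp [v, u]
  have hpow : ∀ i : Fin k, v ^ (k + 1) * u ^ ((i : ℕ) + 1) = v ^ (k - (i : ℕ)) := fun i ↦ by
    rw [show k + 1 = k - (i : ℕ) + (i + 1) by omega, pow_add, mul_assoc, ← mul_pow, hvu, one_pow,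
      mul_one]
  have hlast : HahnSeries.single (-((k + 1 : ℕ) : ℤ)) (-1) = -v ^ (k + 1) := by
    simp [v, HahnSeries.single_pow]
  rw [eval_monicPoly_snoc, eval_monicPoly_snoc, hlast]
  simp only [map_add, map_pow, map_sum, map_mul, map_neg, map_one, HahnSeries.ofPowerSeries_C,
    HahnSeries.ofPowerSeries_X, mul_add, Finset.mul_sum, Function.comp_apply, mul_pow, ← hu,
    ← hpow]
  congr 2
  · refine Finset.sum_congr rfl fun i _ ↦ ?_
    ring
  · ring

theorem exists_laurentSeries_roots [IsDomain R] {ζ : R} (hζ : IsPrimitiveRoot ζ (k + 1))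
    (hk : IsUnit ((k + 1 : ℕ) : R)) (A : Fin k → R) :
    ∃ x : Fin (k + 1) → LaurentSeries R, monicPoly (Fin.snoc (HahnSeries.C ∘ A)
      (HahnSeries.single (-((k + 1 : ℕ) : ℤ)) (-1)) : Fin (k + 1) → LaurentSeries R) =
        ∏ i, (X - C (x i)) := by
  obtain ⟨y, hy, hroot⟩ := exists_injective_isRoot_powerSeries hζ hk A
  refine ⟨fun j ↦ HahnSeries.single (-1) 1 * HahnSeries.ofPowerSeries ℤ R (y j),
    eq_prod_X_sub_C_of_injective (monic_monicPoly _) (fun i j hij ↦ hy ?_) (fun j ↦ ?_)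
      (natDegree_monicPoly _)⟩
  · have hv : IsUnit (HahnSeries.single (-1) 1 : LaurentSeries R) :=
      IsUnit.of_mul_eq_one (HahnSeries.single 1 1) (by simp)
    exact HahnSeries.ofPowerSeries_injective (hv.mul_left_cancel hij)
  · rw [IsRoot, eval_monicPoly_single_mul_ofPowerSeries, (hroot j).eq_zero, map_zero, mul_zero]

end LaurentRoots

section LaurentSubstitution

variable {R S : Type*} [CommRing R] [CommRing S] {n : ℕ}

/-- The substitution `X ↦ -X ^ (-n)` of a Laurent series into polynomials. -/
noncomputable def substNegInvPow (n : ℕ) (R : Type*) [CommRing R] : R[X] →+* LaurentSeries R :=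
  eval₂RingHom HahnSeries.C (HahnSeries.single (-(n : ℤ)) (-1))

@[simp]
theorem substNegInvPow_C (r : R) : substNegInvPow n R (C r) = HahnSeries.C r := by
  simp [substNegInvPow]

@[simp]
theorem substNegInvPow_X :
    substNegInvPow n R X = HahnSeries.single (-(n : ℤ)) (-1) := by
  simp [substNegInvPow]

theorem substNegInvPow_eq_sum (p : R[X]) : substNegInvPow n R p =
    ∑ j ∈ Finset.range (p.natDegree + 1),
      HahnSeries.single (-((n : ℤ) * j)) ((-1) ^ j * p.coeff j) := by
  rw [substNegInvPow, coe_eval₂RingHom, eval₂_eq_sum_range]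
  refine Finset.sum_congr rfl fun j _ ↦ ?_
  rw [HahnSeries.single_pow, HahnSeries.C_apply, HahnSeries.single_mul_single, mul_comm, zero_add,
    nsmul_eq_mul, mul_neg, mul_comm (j : ℤ)]

theorem coeff_substNegInvPow (hn : n ≠ 0) (p : R[X]) (j : ℕ) :
    (substNegInvPow n R p).coeff (-((n : ℤ) * j)) = (-1) ^ j * p.coeff j := by
  rw [substNegInvPow_eq_sum, HahnSeries.coeff_sum, Finset.sum_eq_single j]
  · simp
  · refine fun i _ hij ↦ HahnSeries.coeff_single_of_ne fun h ↦ hij ?_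
    have hmul : (n : ℤ) * j = n * i := neg_injective h
    exact_mod_cast (mul_left_cancel₀ (Nat.cast_ne_zero.2 hn) hmul).symm
  · intro hj
    rw [coeff_eq_zero_of_natDegree_lt (by simpa using hj)]
    simp

theorem coeff_substNegInvPow_eq_zero (p : R[X]) {m : ℤ} (hm : ∀ j : ℕ, m ≠ -((n : ℤ) * j)) :
    (substNegInvPow n R p).coeff m = 0 := by
  rw [substNegInvPow_eq_sum, HahnSeries.coeff_sum]
  exact Finset.sum_eq_zero fun j _ ↦ HahnSeries.coeff_single_of_ne (hm j)

theorem substNegInvPow_injective (hn : n ≠ 0) : Function.Injective (substNegInvPow n R) := by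
  refine (injective_iff_map_eq_zero _).2 fun p hp ↦ Polynomial.ext fun j ↦ ?_
  have hcoeff := coeff_substNegInvPow hn p j
  rw [hp, HahnSeries.coeff_zero] at hcoeff
  rw [coeff_zero]
  exact ((isUnit_one.neg.pow j).mul_right_eq_zero).1 hcoeff.symm

theorem mem_range_substNegInvPow (hn : n ≠ 0) {F : LaurentSeries R}
    (hF : ∀ m : ℤ, (∀ j : ℕ, m ≠ -((n : ℤ) * j)) → F.coeff m = 0) :
    F ∈ Set.range (substNegInvPow n R) := by
  have hlarge : ∀ j : ℕ, (1 - F.order).toNat ≤ j → F.coeff (-((n : ℤ) * j)) = 0 := fun j hj ↦ by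
    refine HahnSeries.coeff_eq_zero_of_lt_order ?_
    have hle : (j : ℤ) ≤ n * j := by exact_mod_cast Nat.le_mul_of_pos_left j hn.bot_lt
    omega
  refine ⟨∑ j ∈ Finset.range (1 - F.order).toNat,
    C ((-1) ^ j * F.coeff (-((n : ℤ) * j))) * X ^ j, ?_⟩
  ext m
  by_cases hm : ∀ j : ℕ, m ≠ -((n : ℤ) * j)
  · rw [coeff_substNegInvPow_eq_zero _ hm, hF _ hm]
  · push Not at hm
    obtain ⟨j, rfl⟩ := hm
    rw [coeff_substNegInvPow hn, finsetSum_coeff]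
    simp only [coeff_C_mul_X_pow, Finset.sum_ite_eq]
    split_ifs with hj
    · simp [← mul_assoc, ← mul_pow]
    · rw [hlarge j (by simpa using hj), mul_zero]

/-- The ring homomorphism applying `f` to every coefficient of a Laurent series. -/
noncomputable def laurentMap (f : R →+* S) : LaurentSeries R →+* LaurentSeries S where
  toFun x := x.map f
  map_zero' := by ext; simp
  map_one' := by
    ext m
    simp [HahnSeries.coeff_one, apply_ite f]
  map_add' x y := by ext; simp
  map_mul' _ _ := HahnSeries.map_mul (f : R →ₙ+* S)

theorem coeff_laurentMap (f : R →+* S) (x : LaurentSeries R) (m : ℤ) :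
    (laurentMap f x).coeff m = f (x.coeff m) := rfl

theorem laurentMap_single (f : R →+* S) (m : ℤ) (r : R) :
    laurentMap f (HahnSeries.single m r) = HahnSeries.single m (f r) := by
  ext l
  simp [coeff_laurentMap, HahnSeries.coeff_single, apply_ite f]

end LaurentSubstitution

section Specialisation

variable {k : ℕ}

/-- The identification of polynomials in `k + 1` variables with polynomials in the last variable
over the polynomials in the first `k` variables. -/
noncomputable def polynomialInLast (k : ℕ) (R : Type*) [CommRing R] :
    MvPolynomial (Fin (k + 1)) R ≃ₐ[R] (MvPolynomial (Fin k) R)[X] :=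
  (MvPolynomial.renameEquiv R finSuccEquivLast).trans (MvPolynomial.optionEquivLeft R (Fin k))

@[simp]
theorem polynomialInLast_X_castSucc {R : Type*} [CommRing R] (i : Fin k) :
    polynomialInLast k R (MvPolynomial.X i.castSucc) = C (MvPolynomial.X i) := by
  simp [polynomialInLast]

@[simp]
theorem polynomialInLast_X_last {R : Type*} [CommRing R] :
    polynomialInLast k R (MvPolynomial.X (Fin.last k)) = X := by
  simp [polynomialInLast]

@[simp]
theorem polynomialInLast_C {R : Type*} [CommRing R] (r : R) :
    polynomialInLast k R (MvPolynomial.C r) = C (MvPolynomial.C r) := by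
  simp [polynomialInLast]

/-- The specialisation of the first `k` variables to the integers `b`; the last variable becomes
the indeterminate. -/
noncomputable def specialize (b : Fin k → ℤ) : MvPolynomial (Fin (k + 1)) ℤ →+* ℤ[X] :=
  (mapRingHom (MvPolynomial.eval b)).comp (polynomialInLast k ℤ).toRingHom

theorem natDegree_specialize_le (b : Fin k → ℤ) (c : MvPolynomial (Fin (k + 1)) ℤ) :
    (specialize b c).natDegree ≤ (polynomialInLast k ℤ c).natDegree :=
  natDegree_map_le

theorem evalRingHom_comp_specialize (b : Fin k → ℤ) (t : ℤ) :
    (evalRingHom t).comp (specialize b) =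
      MvPolynomial.eval (Fin.snoc b t : Fin (k + 1) → ℤ) := by
  refine MvPolynomial.ringHom_ext' (Subsingleton.elim _ _) fun i ↦ ?_
  induction i using Fin.lastCases <;> simp [specialize]

theorem eval_specialize (b : Fin k → ℤ) (t : ℤ) (c : MvPolynomial (Fin (k + 1)) ℤ) :
    (specialize b c).eval t = MvPolynomial.eval (Fin.snoc b t : Fin (k + 1) → ℤ) c :=
  RingHom.congr_fun (evalRingHom_comp_specialize b t) c

theorem evalEval_map_specialize (b : Fin k → ℤ) (t z : ℤ)
    (Ψ : (MvPolynomial (Fin (k + 1)) ℤ)[X]) : evalEval t z (Ψ.map (specialize b)) =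
      (Ψ.map (MvPolynomial.eval (Fin.snoc b t : Fin (k + 1) → ℤ))).eval z := by
  rw [← map_evalRingHom_eval, Polynomial.map_map, evalRingHom_comp_specialize]

end Specialisation

section GenericIrreducibility

variable {k : ℕ}

/-- The coefficients of a polynomial of degree `k + 1` whose last coefficient tends to infinity
while the others are independent indeterminates. -/
noncomputable def tupleAtInfinity (k : ℕ) (K : Type*) [CommRing K] :
    Fin (k + 1) → LaurentSeries (MvPolynomial (Fin k) K) :=
  Fin.snoc (HahnSeries.C ∘ MvPolynomial.X) (HahnSeries.single (-((k + 1 : ℕ) : ℤ)) (-1))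

theorem aeval_tupleAtInfinity {K : Type*} [CommRing K] (c : MvPolynomial (Fin (k + 1)) K) :
    MvPolynomial.aeval (tupleAtInfinity k K) c =
      substNegInvPow (k + 1) (MvPolynomial (Fin k) K) (polynomialInLast k K c) := by
  suffices (MvPolynomial.aeval (R := K) (tupleAtInfinity k K)).toRingHom =
      (substNegInvPow (k + 1) (MvPolynomial (Fin k) K)).comp (polynomialInLast k K).toRingHom from
    RingHom.congr_fun this c
  refine MvPolynomial.ringHom_ext (fun r ↦ ?_) fun i ↦ ?_
  · simp [HahnSeries.algebraMap_apply', PowerSeries.algebraMap_apply, HahnSeries.C_apply]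
  · induction i using Fin.lastCases <;> simp [tupleAtInfinity]

theorem algebraicIndependent_tupleAtInfinity (K : Type*) [CommRing K] :
    AlgebraicIndependent K (tupleAtInfinity k K) := fun c c' h ↦ by
  rw [aeval_tupleAtInfinity, aeval_tupleAtInfinity] at h
  exact (polynomialInLast k K).injective (substNegInvPow_injective k.succ_ne_zero h)

theorem exists_coeff_orbitPolynomial_ne_zero {K : Type*} [CommRing K] [IsDomain K]
    {G : Subgroup (Equiv.Perm (Fin (k + 1)))}
    {x : Fin (k + 1) → LaurentSeries (MvPolynomial (Fin k) K)}
    (h : monicPoly (tupleAtInfinity k K) = ∏ i, (X - C (x i)))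
    {I : Finset (Equiv.Perm (Fin (k + 1)) ⧸ G)} (hne : I.Nonempty) (huniv : I ≠ Finset.univ) :
    ∃ (l : ℕ) (m : ℤ), (∀ j : ℕ, m ≠ -(((k + 1 : ℕ) : ℤ) * j)) ∧
      ((orbitPolynomial G x I).coeff l).coeff m ≠ 0 := by
  by_contra! hzero
  refine huniv (eq_univ_of_orbitPolynomial_mem_lifts (algebraicIndependent_tupleAtInfinity K) h
    hne ((lifts_iff_coeff_lifts _).2 fun l ↦ ?_))
  obtain ⟨p, hp⟩ := mem_range_substNegInvPow k.succ_ne_zero (hzero l)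
  refine ⟨(polynomialInLast k K).symm p, ?_⟩
  rw [← hp]
  simpa using aeval_tupleAtInfinity ((polynomialInLast k K).symm p)

theorem laurentMap_comp_tupleAtInfinity {K : Type*} [CommRing K] (b : Fin k → K) :
    laurentMap (MvPolynomial.eval b) ∘ tupleAtInfinity k K =
      Fin.snoc (HahnSeries.C ∘ b) (HahnSeries.single (-((k + 1 : ℕ) : ℤ)) (-1)) := by
  ext1 i
  induction i using Fin.lastCases <;>
    simp [tupleAtInfinity, laurentMap_single, HahnSeries.C_apply]

theorem map_galoisResolvent_specialize (G : Subgroup (Equiv.Perm (Fin (k + 1)))) {K : Type*}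
    [Field K] [CharZero K] {x : Fin (k + 1) → LaurentSeries (MvPolynomial (Fin k) K)}
    (h : monicPoly (tupleAtInfinity k K) = ∏ i, (X - C (x i))) (b : Fin k → ℤ) :
    (mapRat ((galoisResolvent G).map (specialize b))).map
        ((substNegInvPow (k + 1) K).comp (mapRingHom (algebraMap ℚ K))) =
      (orbitPolynomial G x Finset.univ).map (laurentMap (MvPolynomial.eval fun i ↦ (b i : K))) := by
  rw [map_orbitPolynomial, Polynomial.map_map, Polynomial.map_map]
  refine map_galoisResolvent G _ (Eq.trans ?_ (congrArg
    (Polynomial.map (laurentMap (MvPolynomial.eval fun i ↦ (b i : K)))) h |>.trans ?_))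
  · rw [map_monicPoly, laurentMap_comp_tupleAtInfinity]
    congr 1
    ext1 i
    induction i using Fin.lastCases <;> simp [specialize]
  · simp [Polynomial.map_prod]

theorem exists_ne_zero_forall_irreducible (G : Subgroup (Equiv.Perm (Fin (k + 1)))) :
    ∃ P : MvPolynomial (Fin k) ℂ, P ≠ 0 ∧ ∀ b : Fin k → ℤ,
      MvPolynomial.eval (fun i ↦ (b i : ℂ)) P ≠ 0 →
        Irreducible (mapRat ((galoisResolvent G).map (specialize b))) := by
  classical
  have hunit : IsUnit ((k + 1 : ℕ) : MvPolynomial (Fin k) ℂ) := by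
    simpa using (IsUnit.mk0 ((k : ℂ) + 1) k.cast_add_one_ne_zero).map
      (MvPolynomial.C : ℂ →+* MvPolynomial (Fin k) ℂ)
  obtain ⟨x, hx⟩ := exists_laurentSeries_roots
    ((Complex.isPrimitiveRoot_exp (k + 1) k.succ_ne_zero).map_of_injective
      (MvPolynomial.C_injective (Fin k) ℂ)) hunit MvPolynomial.X
  choose! l m hm hne using fun (I : Finset (Equiv.Perm (Fin (k + 1)) ⧸ G)) hI hI' ↦
    exists_coeff_orbitPolynomial_ne_zero hx hI hI'
  let proper := (Finset.univ : Finset (Finset (Equiv.Perm (Fin (k + 1)) ⧸ G))).filter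
    fun I ↦ I.Nonempty ∧ I ≠ Finset.univ
  refine ⟨∏ I ∈ proper, ((orbitPolynomial G x I).coeff (l I)).coeff (m I),
    Finset.prod_ne_zero_iff.2 fun I hI ↦ ?_, fun b hb ↦ ?_⟩
  · obtain ⟨hI, hI'⟩ := (Finset.mem_filter.1 hI).2
    exact hne I hI hI'
  · set ev := MvPolynomial.eval fun i ↦ (b i : ℂ)
    rw [map_prod, Finset.prod_ne_zero_iff] at hb
    refine irreducible_of_forall_notMem_lifts
      ((substNegInvPow (k + 1) ℂ).comp (mapRingHom (algebraMap ℚ ℂ)))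
      (((monic_galoisResolvent G).map _).map _)
      ((map_galoisResolvent_specialize G hx b).trans (map_orbitPolynomial G (laurentMap ev) x _))
      fun I hI hI' hlift ↦ hb I (by simp [proper, hI, hI']) ?_
    change orbitPolynomial G (laurentMap ev ∘ x) I ∈ lifts _ at hlift
    rw [← map_orbitPolynomial] at hlift
    obtain ⟨p, hp⟩ := (lifts_iff_coeff_lifts _).1 hlift (l I)
    rw [← coeff_laurentMap, ← coeff_map, ← hp]
    exact coeff_substNegInvPow_eq_zero _ (hm I hI hI')

end GenericIrreducibility

section RationalRoot

theorem mem_range_algebraMap_of_forall_gal_eq {F : Type*} [Field F] [CharZero F] (f : F[X])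
    {z : f.SplittingField} (h : ∀ g : f.Gal, g z = z) :
    z ∈ Set.range (algebraMap F f.SplittingField) := by
  have : Normal F f.SplittingField := Normal.of_isSplittingField f
  have : IsGalois F f.SplittingField := IsGalois.mk
  exact IntermediateField.mem_bot.1 ((IsGalois.mem_bot_iff_fixed z).2 h)

theorem exists_int_cast_eq_of_isIntegral {L : Type*} [Field L] [CharZero L] {z : L}
    (hz : IsIntegral ℤ z) (hrat : z ∈ Set.range (algebraMap ℚ L)) : ∃ m : ℤ, (m : L) = z := by
  obtain ⟨r, rfl⟩ := hrat
  obtain ⟨m, rfl⟩ := IsIntegrallyClosed.isIntegral_iff.1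
    ((isIntegral_algebraMap_iff (algebraMap ℚ L).injective).1 hz)
  exact ⟨m, by simp⟩

variable {n : ℕ} {G : Subgroup (Equiv.Perm (Fin n))}

theorem gal_apply_orbitSum_one_eq {f : ℚ[X]} {e : Fin n ≃ f.rootSet f.SplittingField}
    (he : ∀ σ : Equiv.Perm (Fin n), (∃ g : f.Gal, ∀ i, g • e i = e (σ i)) → σ ∈ G)
    (g : f.Gal) :
    g (orbitSum G (fun i ↦ (e i : f.SplittingField)) (1 : Equiv.Perm (Fin n))) =
      orbitSum G (fun i ↦ (e i : f.SplittingField)) (1 : Equiv.Perm (Fin n)) := by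
  let σ : Equiv.Perm (Fin n) := (e.trans (MulAction.toPerm g)).trans e.symm
  have hσ : ∀ i, g • e i = e (σ i) := by simp [σ]
  have hcomp : g ∘ (fun i ↦ (e i : f.SplittingField)) = (fun i ↦ (e i : f.SplittingField)) ∘ σ :=
    funext fun i ↦ congrArg Subtype.val (hσ i)
  have hcoset : σ • ((1 : Equiv.Perm (Fin n)) : Equiv.Perm (Fin n) ⧸ G) =
      ((1 : Equiv.Perm (Fin n)) : Equiv.Perm (Fin n) ⧸ G) := by
    rw [MulAction.Quotient.smul_coe, smul_eq_mul, mul_one]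
    exact (QuotientGroup.eq.2 (by simpa using he σ ⟨g, hσ⟩)).symm
  rw [map_orbitSum, hcomp, orbitSum_comp_perm, hcoset]

theorem exists_eval_map_galoisResolvent_eq_zero {a : Fin n → ℤ} {f : ℚ[X]}
    (hf : (monicPoly a).map (Int.castRingHom ℚ) = f) (h : HasGaloisGroup n f G) :
    ∃ z : ℤ, ((galoisResolvent G).map (MvPolynomial.eval a)).eval z = 0 := by
  obtain ⟨e, he⟩ := h
  let x : Fin n → f.SplittingField := fun i ↦ e i
  let φ := Int.castRingHom f.SplittingField
  have hprod : (monicPoly a).map φ = ∏ i, (X - C (x i)) := by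
    have hmap : (monicPoly a).map φ = f.map (algebraMap ℚ f.SplittingField) := by
      conv_rhs => enter [2]; rw [← hf]
      rw [Polynomial.map_map, Subsingleton.elim φ]
    refine eq_prod_X_sub_C_of_injective ((monic_monicPoly a).map φ)
      (Subtype.val_injective.comp e.injective) (fun i ↦ ?_)
      (((monic_monicPoly a).natDegree_map φ).trans (natDegree_monicPoly a))
    rw [IsRoot, hmap, eval_map_algebraMap]
    exact (mem_rootSet.1 (e i).2).2
  have hresolvent : ((galoisResolvent G).map (MvPolynomial.eval a)).map φ =
      orbitPolynomial G x Finset.univ := by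
    rw [Polynomial.map_map]
    refine map_galoisResolvent G _ (Eq.trans ?_ hprod)
    rw [map_monicPoly]
    congr 1
    ext1 i
    simp
  have hroot : ((galoisResolvent G).map (MvPolynomial.eval a)).eval₂ φ
      (orbitSum G x (1 : Equiv.Perm (Fin n))) = 0 := by
    rw [← eval_map, hresolvent, eval_orbitPolynomial_eq_zero G x (Finset.mem_univ _)]
  obtain ⟨z, hz⟩ := exists_int_cast_eq_of_isIntegral ⟨_, (monic_galoisResolvent G).map _, hroot⟩
    (mem_range_algebraMap_of_forall_gal_eq f (gal_apply_orbitSum_one_eq fun σ ↦ (he σ).2))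
  refine ⟨z, φ.injective_int ?_⟩
  rw [← hz] at hroot
  rw [map_zero, ← hroot]
  exact (eval₂_hom φ z).symm

end RationalRoot

section Bounds

theorem abs_eval_le_sum_abs_coeff_mul_pow {σ R : Type*} [CommRing R] [LinearOrder R]
    [IsStrictOrderedRing R] (c : MvPolynomial σ R) {a : σ → R} {B : R} (hB : 1 ≤ B)
    (ha : ∀ i, |a i| ≤ B) :
    |MvPolynomial.eval a c| ≤ (∑ s ∈ c.support, |c.coeff s|) * B ^ c.totalDegree := by
  rw [MvPolynomial.eval_eq, Finset.sum_mul]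
  refine (Finset.abs_sum_le_sum_abs _ _).trans (Finset.sum_le_sum fun s hs ↦ ?_)
  rw [abs_mul, Finset.abs_prod]
  refine mul_le_mul_of_nonneg_left ?_ (abs_nonneg _)
  calc ∏ i ∈ s.support, |a i ^ s i| ≤ ∏ i ∈ s.support, B ^ s i :=
        Finset.prod_le_prod (fun _ _ ↦ abs_nonneg _) fun i _ ↦ by
          rw [abs_pow]
          exact pow_le_pow_left₀ (abs_nonneg _) (ha i) _
    _ = B ^ s.sum fun _ e ↦ e := Finset.prod_pow_eq_pow_sum _ _ _
    _ ≤ B ^ c.totalDegree := pow_le_pow_right₀ hB (MvPolynomial.le_totalDegree hs)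

variable {k : ℕ} (Ψ : (MvPolynomial (Fin (k + 1)) ℤ)[X])

theorem exists_natDegree_coeff_map_specialize_le : ∃ E : ℕ, ∀ (b : Fin k → ℤ) (l : ℕ),
    ((Ψ.map (specialize b)).coeff l).natDegree ≤ E := by
  refine ⟨Ψ.support.sup fun l ↦ (polynomialInLast k ℤ (Ψ.coeff l)).natDegree, fun b l ↦ ?_⟩
  rw [coeff_map]
  by_cases hl : l ∈ Ψ.support
  · exact (natDegree_specialize_le b _).trans
      (Finset.le_sup (f := fun l ↦ (polynomialInLast k ℤ (Ψ.coeff l)).natDegree) hl)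
  · simp [notMem_support_iff.1 hl]

theorem exists_abs_eval_coeff_map_specialize_le : ∃ K : ℕ, ∀ N : ℕ, 1 ≤ N → ∀ b : Fin k → ℤ,
    (∀ i, |b i| ≤ N) → ∀ (l : ℕ) (t : ℤ), |t| ≤ N →
      |((Ψ.map (specialize b)).coeff l).eval t| ≤ K * (N : ℤ) ^ K := by
  let height : ℕ → ℕ := fun l ↦ (∑ s ∈ (Ψ.coeff l).support, |(Ψ.coeff l).coeff s|).toNat
  let bound : ℕ → ℕ := fun l ↦ max (height l) (Ψ.coeff l).totalDegree
  refine ⟨Ψ.support.sup bound, fun N hN b hb l t ht ↦ ?_⟩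
  rw [coeff_map]
  by_cases hl : l ∈ Ψ.support
  · have hN' : (1 : ℤ) ≤ N := by exact_mod_cast hN
    have hbt : ∀ i, |(Fin.snoc b t : Fin (k + 1) → ℤ) i| ≤ N := fun i ↦ by
      induction i using Fin.lastCases <;> simp [ht, hb]
    have hbound : bound l ≤ Ψ.support.sup bound := Finset.le_sup hl
    rw [eval_specialize]
    refine (abs_eval_le_sum_abs_coeff_mul_pow (Ψ.coeff l) hN' hbt).trans ?_
    refine mul_le_mul ?_ (pow_le_pow_right₀ hN' ((le_max_right _ _).trans hbound))
      (by positivity) (by positivity)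
    exact (Int.self_le_toNat _).trans (by exact_mod_cast (le_max_left _ _).trans hbound)
  · rw [notMem_support_iff.1 hl, map_zero, eval_zero, abs_zero]
    positivity

end Bounds

section Counting

/-- The integer points of the cube `[-N, N] ^ k`. -/
noncomputable def integerBox (k N : ℕ) : Finset (Fin k → ℤ) :=
  Fintype.piFinset fun _ ↦ Finset.Icc (-(N : ℤ)) N

theorem mem_integerBox {k N : ℕ} {a : Fin k → ℤ} : a ∈ integerBox k N ↔ ∀ i, |a i| ≤ N := by
  simp [integerBox, Fintype.mem_piFinset, abs_le]

theorem card_Icc_neg_natCast (N : ℕ) : (Finset.Icc (-(N : ℤ)) N).card = 2 * N + 1 := by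
  rw [Int.card_Icc]
  omega

theorem card_integerBox (k N : ℕ) : (integerBox k N).card = (2 * N + 1) ^ k := by
  rw [integerBox, Fintype.card_piFinset_const, card_Icc_neg_natCast]

open scoped Classical in
theorem card_filter_eval_eq_zero_mul_le {R : Type*} [CommRing R] [IsDomain R] [CharZero R]
    {k : ℕ} {P : MvPolynomial (Fin k) R} (hP : P ≠ 0) (N : ℕ) :
    ((integerBox k N).filter fun b ↦ MvPolynomial.eval (fun i ↦ (b i : R)) P = 0).card *
      (2 * N + 1) ≤ P.totalDegree * (2 * N + 1) ^ k := by
  set S : Finset R := (Finset.Icc (-(N : ℤ)) N).image Int.cast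
  have hS : S.card = 2 * N + 1 := by
    rw [Finset.card_image_of_injective _ Int.cast_injective, card_Icc_neg_natCast]
  have hzeros : {x ∈ Fintype.piFinset fun _ : Fin k ↦ S | MvPolynomial.eval x P = 0}.card *
      (2 * N + 1) ≤ P.totalDegree * (2 * N + 1) ^ k := by
    have hSZ := MvPolynomial.schwartz_zippel_totalDegree hP S
    rw [hS, div_le_div_iff₀ (by positivity) (by positivity)] at hSZ
    exact_mod_cast hSZ
  refine (Nat.mul_le_mul_right _ (Finset.card_le_card_of_injOn (fun b i ↦ (b i : R)) ?_ ?_)).trans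
    hzeros
  · intro b hb
    rw [Finset.mem_coe, Finset.mem_filter, mem_integerBox] at hb
    rw [Finset.mem_coe, Finset.mem_filter, Fintype.mem_piFinset]
    exact ⟨fun i ↦ Finset.mem_image_of_mem _ (Finset.mem_Icc.2 (abs_le.1 (hb.1 i))), hb.2⟩
  · exact fun b _ b' _ h ↦ funext fun i ↦ Int.cast_injective (congrFun h i)

open scoped Classical in
theorem card_eq_sum_card_filter_snoc_mem {k N : ℕ} {T : Finset (Fin (k + 1) → ℤ)}
    (hT : T ⊆ integerBox (k + 1) N) : T.card = ∑ b ∈ integerBox k N,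
      ((Finset.Icc (-(N : ℤ)) N).filter fun t ↦ (Fin.snoc b t : Fin (k + 1) → ℤ) ∈ T).card := by
  have hbound : ∀ a ∈ T, ∀ i, |a i| ≤ N := fun a ha ↦ mem_integerBox.1 (hT ha)
  rw [Finset.card_eq_sum_card_fiberwise (f := fun a ↦ (Fin.init a : Fin k → ℤ))
    (t := integerBox k N) fun a ha ↦ mem_integerBox.2 fun i ↦ hbound a ha i.castSucc]
  refine Finset.sum_congr rfl fun b _ ↦ (Finset.card_nbij' (fun t ↦ Fin.snoc b t)
    (fun a ↦ a (Fin.last k)) (fun t ht ↦ ?_) (fun a ha ↦ ?_) (fun t _ ↦ Fin.snoc_last _ _)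
    fun a ha ↦ ?_).symm
  · simpa using (Finset.mem_filter.1 ht).2
  · obtain ⟨haT, rfl⟩ := Finset.mem_filter.1 ha
    simpa [haT, abs_le] using hbound a haT (Fin.last k)
  · obtain ⟨-, rfl⟩ := Finset.mem_filter.1 ha
    exact Fin.snoc_init_self a

open scoped Classical in
theorem card_le_card_bad_mul_add {k N : ℕ} {T : Finset (Fin (k + 1) → ℤ)}
    (hT : T ⊆ integerBox (k + 1) N) (bad : (Fin k → ℤ) → Prop) {M : ℝ} (hM : 0 ≤ M)
    (hgood : ∀ b ∈ integerBox k N, ¬bad b → (((Finset.Icc (-(N : ℤ)) N).filter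
      fun t ↦ (Fin.snoc b t : Fin (k + 1) → ℤ) ∈ T).card : ℝ) ≤ M) :
    (T.card : ℝ) ≤ ((integerBox k N).filter bad).card * (2 * N + 1) + (2 * N + 1) ^ k * M := by
  rw [card_eq_sum_card_filter_snoc_mem hT, Nat.cast_sum,
    ← Finset.sum_filter_add_sum_filter_not (integerBox k N) bad]
  refine add_le_add ?_ ?_
  · refine (Finset.sum_le_card_nsmul _ _ (2 * N + 1 : ℝ) fun b _ ↦ ?_).trans_eq
      (nsmul_eq_mul _ _)
    exact_mod_cast (Finset.card_filter_le _ _).trans_eq (card_Icc_neg_natCast N)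
  · refine (Finset.sum_le_card_nsmul _ _ M fun b hb ↦ ?_).trans ?_
    · exact hgood b (Finset.mem_filter.1 hb).1 (Finset.mem_filter.1 hb).2
    · rw [nsmul_eq_mul]
      refine mul_le_mul_of_nonneg_right ?_ hM
      exact_mod_cast (Finset.card_filter_le _ _).trans_eq (card_integerBox k N)

theorem exists_card_le_of_irreducible {k : ℕ} (G : Subgroup (Equiv.Perm (Fin (k + 1)))) {ε : ℝ}
    (hε : 0 < ε) : ∃ c : ℝ, 0 ≤ c ∧ ∀ N : ℕ, 1 ≤ N → ∀ b ∈ integerBox k N,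
      Irreducible (mapRat ((galoisResolvent G).map (specialize b))) → ∀ T : Finset ℤ,
      (∀ t ∈ T, |t| ≤ N ∧ HasGaloisGroup (k + 1)
        (monicPoly fun i ↦ ((Fin.snoc b t : Fin (k + 1) → ℤ) i : ℚ)) G) →
      (T.card : ℝ) ≤ c * (N : ℝ) ^ (1 / (G.index : ℝ) + ε) := by
  obtain ⟨E, hE⟩ := exists_natDegree_coeff_map_specialize_le (galoisResolvent G)
  obtain ⟨K, hK⟩ := exists_abs_eval_coeff_map_specialize_le (galoisResolvent G)
  obtain ⟨c, hc, hcount⟩ := bombieri_pila (Subgroup.index_ne_zero_of_finite (H := G)) E K hε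
  refine ⟨c, hc, fun N hN b hb hirr T hT ↦ hcount N hN _ ((monic_galoisResolvent G).map _)
    (((monic_galoisResolvent G).natDegree_map _).trans (natDegree_galoisResolvent G)) hirr (hE b)
    (hK N hN b (mem_integerBox.1 hb)) T fun t ht ↦ ⟨(hT t ht).1, ?_⟩⟩
  obtain ⟨z, hz⟩ := exists_eval_map_galoisResolvent_eq_zero (map_monicPoly _ _) (hT t ht).2
  exact ⟨z, (evalEval_map_specialize b t z _).trans hz⟩

theorem exists_card_hasGaloisGroup_le {k : ℕ} (G : Subgroup (Equiv.Perm (Fin (k + 1)))) {ε : ℝ}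
    (hε : 0 < ε) : ∃ D : ℝ, 0 ≤ D ∧ ∀ N : ℕ, 1 ≤ N → ∀ T ⊆ integerBox (k + 1) N,
      (∀ a ∈ T, HasGaloisGroup (k + 1) (monicPoly fun i ↦ (a i : ℚ)) G) →
      (T.card : ℝ) ≤ D * (N : ℝ) ^ ((k : ℝ) + (1 / (G.index : ℝ) + ε)) := by
  classical
  obtain ⟨P, hP, hirr⟩ := exists_ne_zero_forall_irreducible G
  obtain ⟨c, hc, hfiber⟩ := exists_card_le_of_irreducible G hε
  refine ⟨(P.totalDegree + c) * 3 ^ k, by positivity, fun N hN T hT hgal ↦ ?_⟩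
  have hN' : (1 : ℝ) ≤ N := by exact_mod_cast hN
  set M : ℝ := (N : ℝ) ^ (1 / (G.index : ℝ) + ε)
  have hM : 1 ≤ M := Real.one_le_rpow hN' (by positivity)
  let bad : (Fin k → ℤ) → Prop := fun b ↦ MvPolynomial.eval (fun i ↦ (b i : ℂ)) P = 0
  have hbad : (((integerBox k N).filter bad).card : ℝ) * (2 * N + 1) ≤
      P.totalDegree * (2 * N + 1) ^ k := by
    exact_mod_cast card_filter_eval_eq_zero_mul_le hP N
  have hgood : ∀ b ∈ integerBox k N, ¬bad b → (((Finset.Icc (-(N : ℤ)) N).filter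
      fun t ↦ (Fin.snoc b t : Fin (k + 1) → ℤ) ∈ T).card : ℝ) ≤ c * M := fun b hb hbadb ↦
    hfiber N hN b hb (hirr b hbadb) _ fun t ht ↦
      ⟨abs_le.2 (Finset.mem_Icc.1 (Finset.mem_filter.1 ht).1), hgal _ (Finset.mem_filter.1 ht).2⟩
  calc (T.card : ℝ)
      ≤ ((integerBox k N).filter bad).card * (2 * N + 1) + (2 * N + 1) ^ k * (c * M) :=
        card_le_card_bad_mul_add hT bad (by positivity) hgood
    _ ≤ P.totalDegree * M * (2 * N + 1) ^ k + (2 * N + 1) ^ k * (c * M) := by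
        gcongr ?_ + _
        exact hbad.trans (mul_le_mul_of_nonneg_right
          (le_mul_of_one_le_right (by positivity) hM) (by positivity))
    _ = (P.totalDegree + c) * M * (2 * N + 1) ^ k := by ring
    _ ≤ (P.totalDegree + c) * M * (3 * N) ^ k := by
        gcongr
        linarith
    _ = (P.totalDegree + c) * 3 ^ k * (N : ℝ) ^ ((k : ℝ) + (1 / (G.index : ℝ) + ε)) := by
        rw [Real.rpow_add (by linarith), Real.rpow_natCast]
        ring

end Counting

/-- There are at most `O_{n,ε}(H^(n-1+δ_G+ε))` monic integer polynomials of degree `n` and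
height at most `H` which are separable and have Galois group `G`, where
`δ_G = 1/[Sₙ : G]`. -/
theorem count_polynomials_with_galois_group (n : ℕ) (hn : 0 < n) (ε : ℝ) (hε : 0 < ε)
    (G : Subgroup (Equiv.Perm (Fin n))) :
    ∃ C : ℝ, ∀ H : ℝ, 1 ≤ H →
      (Set.ncard {a : Fin n → ℤ |
          (∀ i, (|a i| : ℝ) ≤ H) ∧
          (X ^ n + ∑ i : Fin n, Polynomial.C ((a i : ℚ)) * X ^ (n - 1 - (i : ℕ)) :
            Polynomial ℚ).Separable ∧
          HasGaloisGroup n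
            (X ^ n + ∑ i : Fin n, Polynomial.C ((a i : ℚ)) * X ^ (n - 1 - (i : ℕ))) G} : ℝ)
        ≤ C * H ^ ((n : ℝ) - 1 + 1 / (G.index : ℝ) + ε) := by
  classical
  obtain ⟨k, rfl⟩ := Nat.exists_eq_add_one.2 hn
  obtain ⟨D, hD, hcount⟩ := exists_card_hasGaloisGroup_le G hε
  refine ⟨D, fun H hH ↦ ?_⟩
  have hH0 : 0 ≤ H := zero_le_one.trans hH
  have hexp : ((k + 1 : ℕ) : ℝ) - 1 + 1 / (G.index : ℝ) + ε = k + (1 / (G.index : ℝ) + ε) := by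
    push_cast
    ring
  have hN : 1 ≤ ⌊H⌋₊ := Nat.le_floor (by exact_mod_cast hH)
  let T := (integerBox (k + 1) ⌊H⌋₊).filter fun a ↦
    HasGaloisGroup (k + 1) (monicPoly fun i ↦ (a i : ℚ)) G
  refine (Nat.cast_le.2 (?_ : _ ≤ T.card)).trans ((hcount ⌊H⌋₊ hN T
    (Finset.filter_subset _ _) fun a ha ↦ (Finset.mem_filter.1 ha).2).trans ?_)
  · rw [← Set.ncard_coe_finset]
    refine Set.ncard_le_ncard (fun a ⟨hheight, _, hgal⟩ ↦ ?_) T.finite_toSet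
    refine Finset.mem_coe.2 (Finset.mem_filter.2 ⟨mem_integerBox.2 fun i ↦ ?_, hgal⟩)
    rw [Int.natCast_floor_eq_floor hH0, Int.le_floor, Int.cast_abs]
    exact hheight i
  · rw [hexp]
    gcongr
    exact Nat.floor_le hH0
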